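/- arXiv:1412.6456 — 2 statements merged into one kernel-verified Lean document; each statement's English description precedes it below -/
import Mathlib

section
/- Let R be a local complete intersection and M, N finitely generated R-modules such that Tor_i^R(M,N) = 0 for all i ≥ 1. Then the depth formula holds: depth(M) + depth(N) = depth(R) + depth(M ⊗_R N) (with the convention depth(0) = ∞). -/
open RingTheory.Sequence CategoryTheory

universe u

noncomputable section

/-- Depth of a module: supremum of lengths of weakly regular sequences consisting of nonunits.
For a f.g. module over a noetherian local ring this is the usual depth, and the zero module
has depth `⊤`. -/
def rdepth (A : Type u) [CommRing A] (M : Type u) [AddCommGroup M] [Module A M] : ℕ∞ :=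
  sSup {n : ℕ∞ | ∃ rs : List A, (rs.length : ℕ∞) = n ∧ (∀ r ∈ rs, r ∈ nonunits A) ∧
    RingTheory.Sequence.IsWeaklyRegular M rs}

/-- Serre's condition `(S_n)`. -/
def SerreCond (R : Type u) [CommRing R] (M : Type u) [AddCommGroup M] [Module R M] (n : ℕ) :
    Prop :=
  ∀ (p : Ideal R) (hp : p.IsPrime), Nontrivial (LocalizedModule p.primeCompl M) →
    min (n : ℕ∞) (Order.height (⟨p, hp⟩ : PrimeSpectrum R)) ≤
      rdepth (Localization.AtPrime p) (LocalizedModule p.primeCompl M)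

/-- `Tor_i^R(M, N)` as an object of `ModuleCat R`. -/
def TorModCat (R : Type u) [CommRing R] (i : ℕ) (M N : Type u) [AddCommGroup M] [Module R M]
    [AddCommGroup N] [Module R N] : ModuleCat.{u} R :=
  ((Tor (ModuleCat.{u} R) i).obj (ModuleCat.of R M)).obj (ModuleCat.of R N)

/-- `Tor_i^R(M, N)` as a type (with its `R`-module structure given by instances below). -/
def TorM (R : Type u) [CommRing R] (i : ℕ) (M N : Type u) [AddCommGroup M] [Module R M]
    [AddCommGroup N] [Module R N] : Type u :=
  TorModCat R i M N

instance (R : Type u) [CommRing R] (i : ℕ) (M N : Type u) [AddCommGroup M] [Module R M]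
    [AddCommGroup N] [Module R N] : AddCommGroup (TorM R i M N) :=
  inferInstanceAs (AddCommGroup (TorModCat R i M N))

instance (R : Type u) [CommRing R] (i : ℕ) (M N : Type u) [AddCommGroup M] [Module R M]
    [AddCommGroup N] [Module R N] : Module R (TorM R i M N) :=
  inferInstanceAs (Module R (TorModCat R i M N))

/-- A regular local ring: noetherian local, whose maximal ideal is generated by a
(weakly) regular sequence. -/
def IsRegLocal (Q : Type u) [CommRing Q] : Prop :=
  IsNoetherianRing Q ∧ IsLocalRing Q ∧
    ∃ rs : List Q, RingTheory.Sequence.IsWeaklyRegular Q rs ∧ (∀ r ∈ rs, r ∈ nonunits Q) ∧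
      Ideal.span {x | x ∈ rs} = Ideal.span (nonunits Q)

/-- A (local) complete intersection: noetherian local ring whose completion is a regular
local ring modulo a regular sequence (of nonunits). -/
def IsCIRing (R : Type u) [CommRing R] : Prop :=
  IsNoetherianRing R ∧ IsLocalRing R ∧
    ∃ (Q : Type u) (_ : CommRing Q), IsRegLocal Q ∧
      ∃ rs : List Q, (∀ r ∈ rs, r ∈ nonunits Q) ∧ RingTheory.Sequence.IsWeaklyRegular Q rs ∧
        Nonempty ((Q ⧸ Ideal.span {x | x ∈ rs}) ≃+* AdicCompletion (Ideal.span (nonunits R)) R)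

/-- A hypersurface: noetherian local ring whose completion is a regular local ring modulo
a single non-zerodivisor in the maximal ideal. -/
def IsHypersurfaceRing (R : Type u) [CommRing R] : Prop :=
  IsNoetherianRing R ∧ IsLocalRing R ∧
    ∃ (Q : Type u) (_ : CommRing Q), IsRegLocal Q ∧
      ∃ f : Q, f ∈ nonunits Q ∧ f ∈ nonZeroDivisors Q ∧
        Nonempty ((Q ⧸ Ideal.span {f}) ≃+* AdicCompletion (Ideal.span (nonunits R)) R)

/-- Maximal Cohen-Macaulay module over a local ring: depth equals the Krull dimension. -/
def IsMCM (R : Type u) [CommRing R] (M : Type u) [AddCommGroup M] [Module R M] : Prop :=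
  (rdepth R M : WithBot ℕ∞) = ringKrullDim R

/-- Cohen-Macaulay local ring. -/
def IsCMLocalRing (A : Type u) [CommRing A] : Prop :=
  IsNoetherianRing A ∧ IsLocalRing A ∧ (rdepth A A : WithBot ℕ∞) = ringKrullDim A

/-- `M` has (constant) rank: free of the same rank at every minimal prime. -/
def HasRank (R : Type u) [CommRing R] (M : Type u) [AddCommGroup M] [Module R M] : Prop :=
  ∃ r : ℕ, ∀ (p : Ideal R) (hp : p.IsPrime), p ∈ minimalPrimes R →
    Nonempty ((LocalizedModule (@Ideal.primeCompl R _ p hp) M)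
      ≃ₗ[Localization (@Ideal.primeCompl R _ p hp)]
      (Fin r → Localization (@Ideal.primeCompl R _ p hp)))

/-- Projective dimension at most `n`. -/
def pdLE (R : Type u) [CommRing R] : ℕ → ∀ (M : Type u) [AddCommGroup M] [Module R M], Prop
  | 0, M, _, _ => Module.Projective R M
  | n+1, M, _, _ => ∃ (P : Type u) (_ : AddCommGroup P) (_ : Module R P),
      Module.Projective R P ∧ ∃ f : P →ₗ[R] M, Function.Surjective f ∧
        pdLE R n (LinearMap.ker f)

/-- Injective dimension at most `n`. -/
def idLE (R : Type u) [CommRing R] : ℕ → ∀ (M : Type u) [AddCommGroup M] [Module R M], Prop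
  | 0, M, _, _ => Module.Injective R M
  | n+1, M, _, _ => ∃ (I : Type u) (_ : AddCommGroup I) (_ : Module R I),
      Module.Injective R I ∧ ∃ f : M →ₗ[R] I, Function.Injective f ∧
        idLE R n (I ⧸ LinearMap.range f)

/-- Gorenstein local ring: noetherian local with finite self-injective dimension. -/
def IsGorensteinLocalRing (R : Type u) [CommRing R] : Prop :=
  IsNoetherianRing R ∧ IsLocalRing R ∧ ∃ n : ℕ, idLE R n R

/-- The map `M → R^ν` obtained from a free cover `ε : R^ν ↠ M^*` by dualizing and composing
with the biduality map; its cokernel is the pushforward `M₁`. -/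
def pushMap (R M : Type u) [CommRing R] [AddCommGroup M] [Module R M] {ν : ℕ}
    (ε : (Fin ν → R) →ₗ[R] Module.Dual R M) : M →ₗ[R] (Fin ν → R) where
  toFun m := fun i => ε (Pi.single i 1) m
  map_add' x y := by funext i; simp
  map_smul' r x := by funext i; simp

/-- Length of a module, as the Krull dimension of its lattice of submodules. -/
def mlen (R : Type u) [CommRing R] (M : Type u) [AddCommGroup M] [Module R M] :
    WithBot ℕ∞ :=
  Order.krullDim (Submodule R M)

/-- An unramified regular local ring: equicharacteristic (contains a field), or of mixed
characteristic `(0, p)` with `p` not in the square of the maximal ideal. -/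
def IsUnramifiedRegLocal (Q : Type u) [CommRing Q] : Prop :=
  IsRegLocal Q ∧
    ((∃ (K : Type u) (_ : Field K), Nonempty (K →+* Q)) ∨
     (CharZero Q ∧ ∃ p : ℕ, p.Prime ∧ (p : Q) ∈ nonunits Q ∧
        (p : Q) ∉ (Ideal.span (nonunits Q)) ^ 2))

/-! Complete `R` to `A = Q ⧸ (rs)` with `Q` regular local and `rs` a regular sequence of length
`c`. The module `A ⊗ M` has a finite minimal free resolution `P` over `Q`, of length `p` say. The
complex `P ⊗ A` has homology in degrees at most `c`; since the elements of `rs` act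
null-homotopically on `P`, this homology is built from `A ⊗ M` by extensions, and it is `A ⊗ M` in
degree `c`. By Tor-independence, tensoring with `A ⊗ N` over `A` commutes with taking this homology.
Counting depths along the resulting complex as in the Auslander-Buchsbaum formula gives
`depth N + c = p + depth (M ⊗ N)`. Here `p` depends only on `M`, so comparing with the case `N = R`
cancels both `c` and `p`. -/

open Limits

section Boundaries

variable {𝒜 : Type*} [Category* 𝒜] [Abelian 𝒜] {ι : Type*} {c : ComplexShape ι}

/-- The short complex `B_j ⟶ K_j ⟶ K_j / B_j` of a complex, with the boundaries `B_j` encoded as the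
kernel of `K_j ⟶ K_j / B_j`. -/
abbrev boundariesShortComplex (K : HomologicalComplex 𝒜 c) (j : ι) : ShortComplex 𝒜 where
  X₁ := kernel (K.pOpcycles j)
  X₂ := K.X j
  X₃ := K.opcycles j
  f := kernel.ι (K.pOpcycles j)
  g := K.pOpcycles j
  zero := kernel.condition _

lemma boundariesShortComplex_shortExact (K : HomologicalComplex 𝒜 c) (j : ι) :
    (boundariesShortComplex K j).ShortExact where
  exact := ShortComplex.exact_kernel _
  mono_f := (inferInstance : Mono (kernel.ι (K.pOpcycles j)))
  epi_g := (inferInstance : Epi (K.pOpcycles j))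

lemma fromOpcycles_pOpcycles (K : HomologicalComplex 𝒜 c) (i j : ι) :
    K.fromOpcycles i j ≫ K.pOpcycles j = 0 := by
  simp [← cancel_epi (K.pOpcycles i)]

/-- The short complex `H_i ⟶ K_i / B_i ⟶ B_j` attached to a differential `K_i ⟶ K_j`. -/
abbrev homologyShortComplex (K : HomologicalComplex 𝒜 c) (i j : ι) : ShortComplex 𝒜 where
  X₁ := K.homology i
  X₂ := K.opcycles i
  X₃ := kernel (K.pOpcycles j)
  f := K.homologyι i
  g := kernel.lift _ (K.fromOpcycles i j) (fromOpcycles_pOpcycles K i j)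
  zero := by
    rw [← cancel_mono (kernel.ι _), Category.assoc, kernel.lift_ι, zero_comp,
      K.homologyι_comp_fromOpcycles]

lemma homologyShortComplex_shortExact (K : HomologicalComplex 𝒜 c) {i j : ι} (hij : c.Rel i j) :
    (homologyShortComplex K i j).ShortExact where
  exact := by
    apply ShortComplex.exact_of_f_is_kernel
    exact isKernelOfComp (kernel.ι (K.pOpcycles j)) (K.fromOpcycles i j)
      (K.homologyIsKernel i j (c.next_eq' hij)) (homologyShortComplex K i j).zero
      (kernel.lift_ι _ _ _)
  mono_f := (inferInstance : Mono (K.homologyι i))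
  epi_g := by
    have hd : (ShortComplex.mk (K.d i j) (K.pOpcycles j) (K.d_pOpcycles i j)).Exact :=
      ShortComplex.exact_of_g_is_cokernel _ (K.opcyclesIsCokernel i j (c.prev_eq' hij))
    have : Epi (kernel.lift (K.pOpcycles j) (K.d i j) (K.d_pOpcycles i j)) :=
      (ShortComplex.exact_iff_epi_kernel_lift _).1 hd
    have hlift : K.pOpcycles i ≫
        kernel.lift (K.pOpcycles j) (K.fromOpcycles i j) (fromOpcycles_pOpcycles K i j) =
        kernel.lift (K.pOpcycles j) (K.d i j) (K.d_pOpcycles i j) :=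
      (cancel_mono (kernel.ι (K.pOpcycles j))).1 (by simp)
    exact (epi_of_epi_fac hlift :)

lemma exists_opcycles_iso_boundaries (K : HomologicalComplex 𝒜 c) {i j : ι} (hij : c.Rel i j)
    (hi : IsZero (K.homology i)) :
    ∃ e : K.opcycles i ≅ kernel (K.pOpcycles j),
      e.hom ≫ kernel.ι (K.pOpcycles j) = K.fromOpcycles i j := by
  have := (homologyShortComplex_shortExact K hij).isIso_g_iff.2 hi
  exact ⟨@asIso _ _ _ _ _ this, kernel.lift_ι _ _ _⟩

end Boundaries

section ExtGrade

open Abelian ZeroObject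

universe w v u'

variable {𝒜 : Type u'} [Category.{v} 𝒜] [Abelian 𝒜] [HasExt.{w} 𝒜]

/-- The grade of `X` with respect to `k`: the least `n` such that `Ext^n(k, X) ≠ 0`, and `⊤` if
there is none. When `k` is the residue field of a local ring this is the depth of `X`. -/
def extGrade (k X : 𝒜) : ℕ∞ :=
  ⨅ (n : ℕ) (_ : Nontrivial (Ext k X n)), (n : ℕ∞)

variable {k : 𝒜}

lemma le_extGrade_iff {X : 𝒜} {e : ℕ∞} :
    e ≤ extGrade k X ↔ ∀ i : ℕ, (i : ℕ∞) < e → Subsingleton (Ext k X i) := by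
  simp only [extGrade, le_iInf_iff]
  exact forall_congr' fun i => by
    rw [← not_subsingleton_iff_nontrivial, ← not_lt, not_imp_not]

lemma subsingleton_ext_of_lt_extGrade {X : 𝒜} {i : ℕ} (h : (i : ℕ∞) < extGrade k X) :
    Subsingleton (Ext k X i) :=
  le_extGrade_iff.1 le_rfl i h

lemma extGrade_le {X : 𝒜} {n : ℕ} (h : Nontrivial (Ext k X n)) : extGrade k X ≤ n :=
  iInf₂_le n h

lemma extGrade_eq_coe_iff {X : 𝒜} {n : ℕ} :
    extGrade k X = n ↔ (∀ i < n, Subsingleton (Ext k X i)) ∧ Nontrivial (Ext k X n) := by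
  refine ⟨fun h => ⟨fun i hi => subsingleton_ext_of_lt_extGrade (by simpa [h] using hi), ?_⟩,
    fun h => (extGrade_le h.2).antisymm (le_extGrade_iff.2 fun i hi => h.1 i (by simpa using hi))⟩
  rw [← not_subsingleton_iff_nontrivial]
  intro hn
  have : ((n + 1 : ℕ) : ℕ∞) ≤ extGrade k X := le_extGrade_iff.2 fun i hi => by
    rcases (Nat.lt_succ_iff_lt_or_eq.1 (by exact_mod_cast hi : i < n + 1)) with hi | rfl
    · exact subsingleton_ext_of_lt_extGrade (by simpa [h] using hi)
    · exact hn
  rw [h] at this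
  exact absurd (by exact_mod_cast this : n + 1 ≤ n) (by omega)

lemma extGrade_eq_top_iff {X : 𝒜} : extGrade k X = ⊤ ↔ ∀ i, Subsingleton (Ext k X i) := by
  simp [← top_le_iff, le_extGrade_iff]

lemma extGrade_congr {X Y : 𝒜} (e : X ≅ Y) : extGrade k X = extGrade k Y := by
  have hiff (i : ℕ) : Nontrivial (Ext k X i) ↔ Nontrivial (Ext k Y i) :=
    ((extFunctorObj k i).mapIso e).addCommGroupIsoToAddEquiv.toEquiv.nontrivial_congr
  simp only [extGrade, hiff]

lemma extGrade_eq_top_of_isZero {X : 𝒜} (hX : IsZero X) : extGrade k X = ⊤ :=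
  extGrade_eq_top_iff.2 fun i =>
    AddCommGrpCat.subsingleton_of_isZero ((extFunctorObj k i).map_isZero hX)

lemma extGrade_eq_zero_of_ne_zero {X : 𝒜} {f : k ⟶ X} (hf : f ≠ 0) : extGrade k X = 0 :=
  nonpos_iff_eq_zero.1 <| extGrade_le (n := 0)
    ⟨Ext.mk₀ f, 0, mt (Ext.mk₀_eq_zero_iff f).1 hf⟩

lemma extFunctorObj_map_eq_zero_iff {X Y : 𝒜} (f : X ⟶ Y) (n : ℕ) :
    (extFunctorObj k n).map f = 0 ↔
      ∀ x : Ext k X n, x.comp (Ext.mk₀ f) (add_zero n) = 0 := by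
  refine ⟨fun h x => congr($h x), fun h => ?_⟩
  ext x
  exact h x

variable {S : ShortComplex 𝒜} (hS : S.ShortExact)
include hS

lemma ext_comp_mk₀_f_injective {n : ℕ} (h : ∀ m, m + 1 = n → Subsingleton (Ext k S.X₃ m))
    {x : Ext k S.X₁ n} (hx : x.comp (Ext.mk₀ S.f) (add_zero n) = 0) : x = 0 := by
  cases n with
  | zero =>
    have := hS.mono_f
    exact Ext.postcomp_mk₀_injective_of_mono k S.f (by simpa using hx)
  | succ m =>
    obtain ⟨y, rfl⟩ := Ext.covariant_sequence_exact₁ k hS x hx rfl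
    have := h m rfl
    simp [Subsingleton.elim y 0]

lemma le_extGrade_X₁ {e : ℕ∞} (h₂ : e ≤ extGrade k S.X₂) (h₃ : e ≤ extGrade k S.X₃ + 1) :
    e ≤ extGrade k S.X₁ := by
  refine le_extGrade_iff.2 fun i hi => subsingleton_of_forall_eq 0 fun x => ?_
  have := le_extGrade_iff.1 h₂ i hi
  refine ext_comp_mk₀_f_injective hS (fun m hm => ?_) (Subsingleton.elim _ 0)
  refine subsingleton_ext_of_lt_extGrade ?_
  have : (m : ℕ∞) + 1 < extGrade k S.X₃ + 1 := by exact_mod_cast hm ▸ hi.trans_le h₃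
  exact lt_of_add_lt_add_right this

lemma le_extGrade_X₂ {e : ℕ∞} (h₁ : e ≤ extGrade k S.X₁) (h₃ : e ≤ extGrade k S.X₃) :
    e ≤ extGrade k S.X₂ := by
  refine le_extGrade_iff.2 fun i hi => subsingleton_of_forall_eq 0 fun x => ?_
  have := le_extGrade_iff.1 h₁ i hi
  have := le_extGrade_iff.1 h₃ i hi
  obtain ⟨y, rfl⟩ := Ext.covariant_sequence_exact₂ k hS x (Subsingleton.elim _ 0)
  simp [Subsingleton.elim y 0]

lemma le_extGrade_X₃ {e : ℕ∞} (h₁ : e + 1 ≤ extGrade k S.X₁) (h₂ : e ≤ extGrade k S.X₂) :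
    e ≤ extGrade k S.X₃ := by
  refine le_extGrade_iff.2 fun i hi => subsingleton_of_forall_eq 0 fun x => ?_
  have := le_extGrade_iff.1 h₁ (i + 1) (by
    push_cast
    exact (ENat.add_lt_add_iff_right ENat.one_ne_top).2 hi)
  have := le_extGrade_iff.1 h₂ i hi
  obtain ⟨y, rfl⟩ := Ext.covariant_sequence_exact₃ k hS x rfl (Subsingleton.elim _ 0)
  simp [Subsingleton.elim y 0]

lemma exists_extGrade_X₃_eq {e : ℕ} (h₁ : extGrade k S.X₁ = e) (h₂ : e ≤ extGrade k S.X₂)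
    (hf : (extFunctorObj k e).map S.f = 0) : ∃ e', e' + 1 = e ∧ extGrade k S.X₃ = e' := by
  rw [extFunctorObj_map_eq_zero_iff] at hf
  have := (extGrade_eq_coe_iff.1 h₁).2
  obtain ⟨x, hx⟩ := exists_ne (0 : Ext k S.X₁ e)
  obtain ⟨e', rfl, he'⟩ : ∃ m, m + 1 = e ∧ Nontrivial (Ext k S.X₃ m) := by
    by_contra! h
    exact hx (ext_comp_mk₀_f_injective hS (fun m hm => h m hm) (hf x))
  exact ⟨e', rfl, (extGrade_le he').antisymm
    (le_extGrade_X₃ hS h₁.ge (le_trans (by exact_mod_cast e'.le_succ) h₂))⟩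

lemma extGrade_X₃_add_one_eq (h : extGrade k S.X₁ ≤ extGrade k S.X₂)
    (hf : ∀ n, (extFunctorObj k n).map S.f = 0) : extGrade k S.X₃ + 1 = extGrade k S.X₁ := by
  cases h₁ : extGrade k S.X₁ with
  | top =>
    have h₃ : extGrade k S.X₃ = ⊤ := top_le_iff.1 (le_extGrade_X₃ hS h₁.ge (h₁ ▸ h))
    rw [h₃, top_add]
  | coe e =>
    obtain ⟨e', rfl, h₃⟩ := exists_extGrade_X₃_eq hS h₁ (h₁ ▸ h) (hf e)
    rw [h₃, Nat.cast_add, Nat.cast_one]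

/-- The objects of grade at least `d` with respect to `k`. -/
def gradeAtLeast (k : 𝒜) (d : ℕ∞) : ObjectProperty 𝒜 := fun X => d ≤ extGrade k X

instance {d : ℕ∞} : (gradeAtLeast k d).ContainsZero where
  exists_zero :=
    ⟨0, isZero_zero 𝒜, le_top.trans_eq (extGrade_eq_top_of_isZero (isZero_zero 𝒜)).symm⟩

instance {d : ℕ∞} : (gradeAtLeast k d).IsClosedUnderIsomorphisms where
  of_iso e h := h.trans_eq (extGrade_congr e)

instance {d : ℕ∞} : (gradeAtLeast k d).IsClosedUnderExtensions where
  prop_X₂_of_shortExact hS h₁ h₃ := le_extGrade_X₂ hS h₁ h₃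

end ExtGrade

section DepthCount

open Abelian

universe w v u'

variable {𝒜 : Type u'} [Category.{v} 𝒜] [Abelian 𝒜] [HasExt.{w} 𝒜] {k : 𝒜}
  (K : ChainComplex 𝒜 ℕ)

section LowerBound

variable {K} {d t : ℕ∞} (hX : ∀ i, d ≤ extGrade k (K.X i))
  (hH : ∀ i, t ≤ extGrade k (K.homology i))
include hX hH

lemma le_extGrade_opcycles (i : ℕ) : min d t ≤ extGrade k (K.opcycles i) := by
  induction i with
  | zero =>
    have := K.isIso_homologyι₀
    exact (min_le_right _ _).trans ((hH 0).trans_eq (extGrade_congr (asIso (K.homologyι 0))))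
  | succ i ih =>
    refine le_extGrade_X₂ (homologyShortComplex_shortExact K (i := i + 1) (j := i) rfl)
      ((min_le_right _ _).trans (hH _)) ?_
    exact le_extGrade_X₁ (boundariesShortComplex_shortExact K i)
      ((min_le_left _ _).trans (hX i)) (ih.trans le_self_add)

lemma le_extGrade_boundaries (i : ℕ) :
    min d (t + 1) ≤ extGrade k (kernel (K.pOpcycles i)) := by
  refine le_extGrade_X₁ (boundariesShortComplex_shortExact K i) ((min_le_left _ _).trans (hX i)) ?_
  calc min d (t + 1) ≤ min d t + 1 := by
        rw [← min_add_add_right]; exact min_le_min le_self_add le_rfl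
    _ ≤ _ := by gcongr; exact le_extGrade_opcycles hX hH i

end LowerBound

variable {K} {d t p c : ℕ}

lemma extGrade_opcycles_eq (hX : ∀ i, d ≤ extGrade k (K.X i)) (hp : extGrade k (K.X p) = d)
    (hp' : IsZero (K.X (p + 1))) (hd : ∀ j, (extFunctorObj k d).map (K.d p j) = 0)
    (hH : ∀ i > c, IsZero (K.homology i)) (m : ℕ) :
    ∀ i, i + m = p → c ≤ i → ∃ e, e + m = d ∧ extGrade k (K.opcycles i) = e ∧
      ∀ j, (extFunctorObj k e).map (K.fromOpcycles i j) = 0 := by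
  induction m with
  | zero =>
    rintro i rfl -
    have := K.isIso_pOpcycles (i + 1) i (by simp) (hp'.eq_of_src _ _)
    refine ⟨d, rfl, (extGrade_congr (asIso (K.pOpcycles i))).symm.trans hp, fun j => ?_⟩
    rw [← cancel_epi ((extFunctorObj k d).map (K.pOpcycles i)), ← Functor.map_comp,
      K.p_fromOpcycles, comp_zero]
    exact hd j
  | succ m ih =>
    intro i hi hci
    obtain ⟨e, he, hU, hzero⟩ := ih (i + 1) (by omega) (by omega)
    obtain ⟨φ, hφ⟩ := exists_opcycles_iso_boundaries K (i := i + 1) (j := i) rfl (hH _ (by omega))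
    have hf : (extFunctorObj k e).map (kernel.ι (K.pOpcycles i)) = 0 := by
      rw [← cancel_epi ((extFunctorObj k e).map φ.hom), ← Functor.map_comp, hφ, hzero, comp_zero]
    have hed : (e : ℕ∞) ≤ d := by exact_mod_cast (by omega : e ≤ d)
    obtain ⟨e', rfl, hU'⟩ := exists_extGrade_X₃_eq (boundariesShortComplex_shortExact K i)
      ((extGrade_congr φ).symm.trans hU) (hed.trans (hX i)) hf
    refine ⟨e', by omega, hU', fun j => ?_⟩
    have := subsingleton_ext_of_lt_extGrade (k := k) (X := K.X j) (i := e')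
      (lt_of_lt_of_le (by exact_mod_cast (by omega)) (hX j))
    ext x
    exact Subsingleton.elim (α := Ext k (K.X j) e') _ _

lemma eq_of_extGrade_opcycles_eq {e : ℕ} (hX : ∀ i, d ≤ extGrade k (K.X i))
    (hH : ∀ i, t ≤ extGrade k (K.homology i)) (hc : extGrade k (K.homology c) = t)
    (hed : e ≤ d) (hU : extGrade k (K.opcycles c) = e)
    (hzero : ∀ j, (extFunctorObj k e).map (K.fromOpcycles c j) = 0) : e = t := by
  cases c with
  | zero =>
    have := K.isIso_homologyι₀
    rw [extGrade_congr (asIso (K.homologyι 0))] at hc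
    exact_mod_cast hU.symm.trans hc
  | succ c =>
    have hS := homologyShortComplex_shortExact K (i := c + 1) (j := c) rfl
    refine le_antisymm ?_ ?_ <;> by_contra! hlt
    · have hte : (t : ℕ∞) + 1 ≤ e := by exact_mod_cast hlt
      have hW : (t : ℕ∞) + 1 ≤ extGrade k (kernel (K.pOpcycles c)) :=
        (le_min (hte.trans (by exact_mod_cast hed)) le_rfl).trans (le_extGrade_boundaries hX hH c)
      have hH' : (t : ℕ∞) + 1 ≤ extGrade k (K.homology (c + 1)) :=
        le_extGrade_X₁ hS (hte.trans_eq hU.symm) (hW.trans le_self_add)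
      rw [hc] at hH'
      exact absurd (by exact_mod_cast hH' : t + 1 ≤ t) (by omega)
    · have hdt : (e : ℕ∞) ≤ min (d : ℕ∞) t :=
        le_min (by exact_mod_cast hed) (by exact_mod_cast hlt.le)
      have : Nontrivial (Ext k (K.opcycles (c + 1)) e) := (extGrade_eq_coe_iff.1 hU).2
      obtain ⟨x, hx⟩ := exists_ne (0 : Ext k (K.opcycles (c + 1)) e)
      have := subsingleton_ext_of_lt_extGrade (k := k) (X := K.homology (c + 1)) (i := e)
        (hc ▸ by exact_mod_cast hlt)
      have hg : x.comp (Ext.mk₀ (homologyShortComplex K (c + 1) c).g) (add_zero e) = 0 := by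
        refine ext_comp_mk₀_f_injective (boundariesShortComplex_shortExact K c) (fun m hm =>
          subsingleton_ext_of_lt_extGrade (lt_of_lt_of_le ?_ (le_extGrade_opcycles hX hH c))) ?_
        · exact (by exact_mod_cast (by omega) : (m : ℕ∞) < e).trans_le hdt
        · rw [Ext.comp_assoc_of_second_deg_zero, Ext.mk₀_comp_mk₀, kernel.lift_ι]
          exact (extFunctorObj_map_eq_zero_iff _ _).1 (hzero c) x
      obtain ⟨y, rfl⟩ := Ext.covariant_sequence_exact₂ k hS x hg
      exact hx (by rw [Subsingleton.elim y 0, Ext.zero_comp])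

theorem add_eq_add_of_extGrade_homology (hX : ∀ i, d ≤ extGrade k (K.X i))
    (hp : extGrade k (K.X p) = d) (hp' : ∀ i > p, IsZero (K.X i))
    (hd : ∀ j, (extFunctorObj k d).map (K.d p j) = 0) (hH : ∀ i, t ≤ extGrade k (K.homology i))
    (hc : extGrade k (K.homology c) = t) (hc' : ∀ i > c, IsZero (K.homology i)) :
    d + c = p + t := by
  have hcp : c ≤ p := by
    by_contra! h
    have := extGrade_eq_top_of_isZero (k := k) ((K.exactAt_iff_isZero_homology c).1
      (.of_isZero (hp' c h)))
    simp [hc] at this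
  obtain ⟨e, he, hU, hzero⟩ := extGrade_opcycles_eq hX hp (hp' _ p.lt_succ_self) hd hc'
    (p - c) c (by omega) le_rfl
  have := eq_of_extGrade_opcycles_eq hX hH hc (by omega) hU hzero
  omega

end DepthCount

section HigherAcyclic

universe v u₁ u₂

variable {𝒜 : Type u₁} {ℬ : Type u₂} [Category.{v} 𝒜] [Category.{v} ℬ] [Abelian 𝒜] [Abelian ℬ]
  (Ψ : 𝒜 ⥤ ChainComplex ℬ ℕ)

/-- `X` is `Ψ`-acyclic if the complex `Ψ X` has no homology in positive degrees. For
`Ψ X = X ⊗ L` with `L` a resolution of `N`, this says that `X` and `N` are Tor-independent. -/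
def IsHigherAcyclic : ObjectProperty 𝒜 := fun X => ∀ i, (Ψ.obj X).ExactAt (i + 1)

variable {Ψ} [Ψ.PreservesZeroMorphisms] {S : ShortComplex 𝒜}

section

variable (hS : (S.map Ψ).ShortExact)
include hS

lemma IsHigherAcyclic.X₂ (h₁ : IsHigherAcyclic Ψ S.X₁) (h₃ : IsHigherAcyclic Ψ S.X₃) :
    IsHigherAcyclic Ψ S.X₂ :=
  fun i => hS.exactAt_X₂ _ (h₁ i) (h₃ i)

lemma IsHigherAcyclic.X₁ (h₂ : IsHigherAcyclic Ψ S.X₂) (h₃ : IsHigherAcyclic Ψ S.X₃) :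
    IsHigherAcyclic Ψ S.X₁ := fun i =>
  hS.exactAt_X₁ _
    ⟨fun _ _ _ => ((HomologicalComplex.exactAt_iff_isZero_homology _ _).1 (h₂ i)).eq_of_tgt _ _⟩
    fun j hj => by
      obtain rfl : j = i + 2 := hj.symm
      exact ⟨fun _ _ _ =>
        ((HomologicalComplex.exactAt_iff_isZero_homology _ _).1 (h₃ (i + 1))).eq_of_src _ _⟩

lemma shortExact_map_of_isHigherAcyclic {F : 𝒜 ⥤ ℬ} [F.Additive] [PreservesFiniteColimits F]
    (α : Ψ ⋙ HomologicalComplex.homologyFunctor _ _ 0 ≅ F) (hS' : S.ShortExact)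
    (h₃ : IsHigherAcyclic Ψ S.X₃) : (S.map F).ShortExact := by
  have hδ : hS.δ 1 0 rfl = 0 :=
    ((HomologicalComplex.exactAt_iff_isZero_homology _ _).1 (h₃ 0)).eq_of_src _ _
  have : Mono ((Ψ ⋙ HomologicalComplex.homologyFunctor _ _ 0).map S.f) :=
    (hS.homology_exact₁ 1 0 rfl).mono_g hδ
  have hmap := NatIso.naturality_1 α S.f
  obtain ⟨hexact, hepi⟩ := F.preservesFiniteColimits_iff_forall_exact_map_and_epi.1 inferInstance
    S hS'
  exact { exact := hexact, mono_f := (hmap ▸ inferInstance : Mono (F.map S.f)), epi_g := hepi }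

end

section HomologyOfMap

variable {T : ObjectProperty 𝒜}
  (hΨ : ∀ S : ShortComplex 𝒜, S.ShortExact → T S.X₂ → (S.map Ψ).ShortExact)
  {K : ChainComplex 𝒜 ℕ} (hT : ∀ i, T (K.X i)) (hK : ∀ i, IsHigherAcyclic Ψ (K.X i))
  (hH : ∀ i, IsHigherAcyclic Ψ (K.homology i))

include hΨ hT

lemma shortExact_boundariesShortComplex_map (i : ℕ) :
    ((boundariesShortComplex K i).map Ψ).ShortExact :=
  hΨ _ (boundariesShortComplex_shortExact K i) (hT i)

variable [T.IsClosedUnderQuotients]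

lemma shortExact_homologyShortComplex_map (i : ℕ) :
    ((homologyShortComplex K (i + 1) i).map Ψ).ShortExact :=
  hΨ _ (homologyShortComplex_shortExact K rfl) (T.prop_of_epi (K.pOpcycles (i + 1)) (hT _))

include hK hH

lemma isHigherAcyclic_opcycles (i : ℕ) : IsHigherAcyclic Ψ (K.opcycles i) := by
  induction i with
  | zero =>
    have := K.isIso_homologyι₀
    exact fun i => (hH 0 i).of_iso (Ψ.mapIso (asIso (K.homologyι 0)))
  | succ i ih =>
    exact .X₂ (shortExact_homologyShortComplex_map hΨ hT i) (hH (i + 1))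
      (.X₁ (shortExact_boundariesShortComplex_map hΨ hT i) (hK i) ih)

lemma isHigherAcyclic_boundaries (i : ℕ) : IsHigherAcyclic Ψ (kernel (K.pOpcycles i)) :=
  .X₁ (shortExact_boundariesShortComplex_map hΨ hT i) (hK i)
    (isHigherAcyclic_opcycles hΨ hT hK hH i)

variable {F : 𝒜 ⥤ ℬ} [F.Additive] [PreservesFiniteColimits F]
  (α : Ψ ⋙ HomologicalComplex.homologyFunctor _ _ 0 ≅ F)

include α

lemma exact_map_homologyι_fromOpcycles (i j : ℕ) (hij : (ComplexShape.down ℕ).next i = j) :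
    ((ShortComplex.mk (K.homologyι i) (K.fromOpcycles i j) (by simp)).map F).Exact ∧
      Mono (F.map (K.homologyι i)) := by
  cases i with
  | zero =>
    have := K.isIso_homologyι₀
    have hzero : K.fromOpcycles 0 j = 0 := by simp [← cancel_epi (K.pOpcycles 0)]
    exact ⟨(ShortComplex.exact_iff_epi _ ((congrArg F.map hzero).trans (F.map_zero _ _))).2
      (inferInstance : Epi (F.map (K.homologyι 0))), inferInstance⟩
  | succ i =>
    obtain rfl : i = j := by simpa using hij
    have hW := shortExact_map_of_isHigherAcyclic (shortExact_boundariesShortComplex_map hΨ hT i) α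
      (boundariesShortComplex_shortExact K i) (isHigherAcyclic_opcycles hΨ hT hK hH i)
    have hU := shortExact_map_of_isHigherAcyclic (shortExact_homologyShortComplex_map hΨ hT i) α
      (homologyShortComplex_shortExact K rfl) (isHigherAcyclic_boundaries hΨ hT hK hH i)
    let φ : homologyShortComplex K (i + 1) i ⟶
        ShortComplex.mk (K.homologyι (i + 1)) (K.fromOpcycles (i + 1) i) (by simp) :=
      { τ₁ := 𝟙 _, τ₂ := 𝟙 _, τ₃ := kernel.ι (K.pOpcycles i) }
    let φF := F.mapShortComplex.map φ
    have : Epi φF.τ₁ := (inferInstance : Epi (F.map (𝟙 _)))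
    have : IsIso φF.τ₂ := (inferInstance : IsIso (F.map (𝟙 _)))
    have : Mono φF.τ₃ := hW.mono_f
    exact ⟨(ShortComplex.exact_iff_of_epi_of_isIso_of_mono φF).1 hU.exact, hU.mono_f⟩

theorem nonempty_homology_map_iso (i : ℕ) :
    Nonempty (((F.mapHomologicalComplex _).obj K).homology i ≅ F.obj (K.homology i)) := by
  obtain ⟨hexact, hmono⟩ := exact_map_homologyι_fromOpcycles hΨ hT hK hH α i _ rfl
  have hQ : IsColimit (CokernelCofork.ofπ (f := F.map (K.d _ i)) (F.map (K.pOpcycles i)) _) :=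
    isColimitCoforkMapOfIsColimit' F _ (K.opcyclesIsCokernel _ i rfl)
  have hdesc : hQ.desc (CokernelCofork.ofπ _ (((F.mapHomologicalComplex _).obj K).sc i).zero) =
      F.map (K.fromOpcycles i _) := by
    refine Cofork.IsColimit.hom_ext hQ ((hQ.fac _ _).trans ?_)
    exact (congrArg F.map (K.p_fromOpcycles i _).symm).trans (F.map_comp _ _)
  have : Mono ((ShortComplex.mk (K.homologyι i) (K.fromOpcycles i ((ComplexShape.down ℕ).next i))
      (by simp)).map F).f := hmono
  let h : (((F.mapHomologicalComplex _).obj K).sc i).RightHomologyData :=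
    { Q := F.obj (K.opcycles i)
      H := F.obj (K.homology i)
      p := F.map (K.pOpcycles i)
      ι := F.map (K.homologyι i)
      wp := _
      hp := hQ
      wι := _
      hι := isKernelCompMono hexact.fIsKernel (𝟙 _) (hdesc.trans (Category.comp_id _).symm) }
  exact ⟨h.homologyIso⟩

end HomologyOfMap

end HigherAcyclic

section TensorComplex

open MonoidalCategory

variable {R : Type u} [CommRing R]

/-- The functor `X ↦ X ⊗ K` for a fixed chain complex `K` of `R`-modules. -/
abbrev tensorComplex (K : ChainComplex (ModuleCat.{u} R) ℕ) :
    ModuleCat.{u} R ⥤ ChainComplex (ModuleCat.{u} R) ℕ where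
  obj X := ((tensorLeft X).mapHomologicalComplex _).obj K
  map f := (NatTrans.mapHomologicalComplex ((curriedTensor _).map f) _).app K

variable (K : ChainComplex (ModuleCat.{u} R) ℕ)

instance : (tensorComplex K).Additive where
  map_add := by
    intros
    ext1
    exact MonoidalPreadditive.add_whiskerRight _ _

lemma shortExact_map_tensorComplex {S : ShortComplex (ModuleCat.{u} R)}
    (hS : ∀ i, (S.map (tensorRight (K.X i))).ShortExact) :
    (S.map (tensorComplex K)).ShortExact :=
  HomologicalComplex.shortExact_of_degreewise_shortExact _ hS

variable {K}

lemma homologyMap_tensorComplex_smul_eq_zero {r : R} (h : Homotopy (r • 𝟙 K) 0)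
    (T : ModuleCat.{u} R) (j : ℕ) :
    HomologicalComplex.homologyMap ((tensorComplex K).map (r • 𝟙 T)) j = 0 := by
  have hr : (tensorComplex K).map (r • 𝟙 T) =
      ((tensorLeft T).mapHomologicalComplex _).map (r • 𝟙 K) := by
    ext1 i
    exact (MonoidalLinear.smul_whiskerRight r (𝟙 T) _).trans
      (MonoidalLinear.whiskerLeft_smul T r (𝟙 (K.X i))).symm
  rw [hr, ((tensorLeft T).mapHomotopy h).homologyMap_eq, Functor.map_zero,
    HomologicalComplex.homologyMap_zero]

section RegularSequence

variable [∀ i, Module.Flat R (K.X i)] {T : ModuleCat.{u} R}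

lemma shortExact_map_smulShortComplex_tensorComplex {r : R} (hr : IsSMulRegular T r) :
    ((T.smulShortComplex r).map (tensorComplex K)).ShortExact :=
  shortExact_map_tensorComplex K fun i =>
    hr.smulShortComplex_shortExact.map_of_exact (tensorRight (K.X i))

variable (T) in
/-- The isomorphism `T ⧸ (r, rs)T ≅ (T ⧸ rT) ⧸ rs(T ⧸ rT)`. -/
def quotConsIso (r : R) (rs : List R) :
    ModuleCat.of R (T ⧸ (Ideal.ofList (r :: rs) • ⊤ : Submodule R T)) ≅
      ModuleCat.of R (QuotSMulTop r T ⧸ (Ideal.ofList rs • ⊤ : Submodule R (QuotSMulTop r T))) :=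
  (Submodule.quotOfListConsSMulTopEquivQuotSMulTopInner T r rs).toModuleIso

variable (T) in
/-- The isomorphism of `T` with its quotient by the empty sequence. -/
def quotNilIso : ModuleCat.of R (T ⧸ (Ideal.ofList ([] : List R) • ⊤ : Submodule R T)) ≅ T :=
  (Submodule.quotEquivOfEqBot _
    (by rw [Ideal.ofList_nil, Submodule.bot_smul])).toModuleIso

lemma exactAt_tensorComplex_quotSMulTop {r : R} (hr : IsSMulRegular T r) {j : ℕ}
    (h : ((tensorComplex K).obj T).ExactAt (j + 1)) (h' : ((tensorComplex K).obj T).ExactAt j) :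
    ((tensorComplex K).obj (ModuleCat.of R (QuotSMulTop r T))).ExactAt (j + 1) :=
  (shortExact_map_smulShortComplex_tensorComplex hr).exactAt_X₃ _
    ⟨fun _ _ _ => ((HomologicalComplex.exactAt_iff_isZero_homology _ _).1 h).eq_of_src _ _⟩
    fun i hi => by
      obtain rfl : i = j := Nat.succ.inj hi
      exact ⟨fun _ _ _ =>
        ((HomologicalComplex.exactAt_iff_isZero_homology _ _).1 h').eq_of_tgt _ _⟩

lemma exactAt_tensorComplex_quotient {c : ℕ} {rs : List R} (hrs : IsWeaklyRegular T rs)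
    (hT : ∀ j > c, ((tensorComplex K).obj T).ExactAt j) :
    ∀ j > c + rs.length, ((tensorComplex K).obj
      (ModuleCat.of R (T ⧸ (Ideal.ofList rs • ⊤ : Submodule R T)))).ExactAt j := by
  induction rs generalizing T c with
  | nil => exact fun j hj => (hT j hj).of_iso ((tensorComplex K).mapIso (quotNilIso T).symm)
  | cons r rs ih =>
    obtain ⟨hr, hrs⟩ := (isWeaklyRegular_cons_iff T r rs).1 hrs
    intro j hj
    rw [List.length_cons] at hj
    refine (ih (T := ModuleCat.of R (QuotSMulTop r T)) (c := c + 1) hrs (fun i hi => ?_) j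
      (by lia)).of_iso ((tensorComplex K).mapIso (quotConsIso T r rs).symm)
    obtain ⟨i, rfl⟩ := Nat.exists_eq_add_of_le' (Nat.one_le_of_lt hi)
    exact exactAt_tensorComplex_quotSMulTop hr (hT _ (by lia)) (hT _ (by lia))

/-- The short exact sequence `H_{j+1}(T ⊗ K) ⟶ H_{j+1}(T/rT ⊗ K) ⟶ H_j(T ⊗ K)` available when
multiplication by `r` is null-homotopic on `K`. -/
abbrev homologyQuotSMulTopShortComplex {r : R} (hr : IsSMulRegular T r) (j : ℕ) :
    ShortComplex (ModuleCat.{u} R) :=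
  .mk _ _ ((shortExact_map_smulShortComplex_tensorComplex (K := K) hr).comp_δ (j + 1) j rfl)

lemma homologyQuotSMulTopShortComplex_shortExact {r : R} (hr : IsSMulRegular T r)
    (h : Homotopy (r • 𝟙 K) 0) (j : ℕ) :
    (homologyQuotSMulTopShortComplex (K := K) hr j).ShortExact where
  exact := (shortExact_map_smulShortComplex_tensorComplex hr).homology_exact₃ _ _ _
  mono_f := ((shortExact_map_smulShortComplex_tensorComplex hr).homology_exact₂ (j + 1)).mono_g
    (homologyMap_tensorComplex_smul_eq_zero h T (j + 1))
  epi_g := ((shortExact_map_smulShortComplex_tensorComplex hr).homology_exact₁ _ _ _).epi_f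
    (homologyMap_tensorComplex_smul_eq_zero h T j)

theorem nonempty_homology_tensorComplex_quotient_iso {c : ℕ} {rs : List R}
    (hrs : IsWeaklyRegular T rs) (hK : ∀ r ∈ rs, Nonempty (Homotopy (r • 𝟙 K) 0))
    (hT : ∀ j > c, ((tensorComplex K).obj T).ExactAt j) :
    Nonempty (((tensorComplex K).obj
      (ModuleCat.of R (T ⧸ (Ideal.ofList rs • ⊤ : Submodule R T)))).homology (c + rs.length) ≅
        ((tensorComplex K).obj T).homology c) := by
  induction rs generalizing T c with
  | nil => exact ⟨(HomologicalComplex.homologyFunctor _ _ _).mapIso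
      ((tensorComplex K).mapIso (quotNilIso T))⟩
  | cons r rs ih =>
    obtain ⟨hr, hrs⟩ := (isWeaklyRegular_cons_iff T r rs).1 hrs
    obtain ⟨hr', hK⟩ := List.forall_mem_cons.1 hK
    obtain ⟨e⟩ := ih (T := ModuleCat.of R (QuotSMulTop r T)) (c := c + 1) hrs hK fun i hi => by
      obtain ⟨i, rfl⟩ := Nat.exists_eq_add_of_le' (Nat.one_le_of_lt hi)
      exact exactAt_tensorComplex_quotSMulTop hr (hT _ (by lia)) (hT _ (by lia))
    have hS := homologyQuotSMulTopShortComplex_shortExact hr hr'.some c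
    have : IsIso (homologyQuotSMulTopShortComplex (K := K) hr c).g := hS.isIso_g_iff.2
      ((HomologicalComplex.exactAt_iff_isZero_homology _ _).1 (hT (c + 1) (by lia)))
    let e' := asIso (homologyQuotSMulTopShortComplex (K := K) hr c).g
    rw [List.length_cons, add_comm rs.length, ← add_assoc]
    exact ⟨(HomologicalComplex.homologyFunctor _ _ _).mapIso
      ((tensorComplex K).mapIso (quotConsIso T r rs)) ≪≫ e ≪≫ e'⟩

theorem prop_homology_tensorComplex_quotient {P : ObjectProperty (ModuleCat.{u} R)}
    [P.IsClosedUnderIsomorphisms] [P.IsClosedUnderExtensions] {rs : List R}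
    (hrs : IsWeaklyRegular T rs) (hK : ∀ r ∈ rs, Nonempty (Homotopy (r • 𝟙 K) 0))
    (hT : ∀ j, P (((tensorComplex K).obj T).homology j)) (j : ℕ) :
    P (((tensorComplex K).obj
      (ModuleCat.of R (T ⧸ (Ideal.ofList rs • ⊤ : Submodule R T)))).homology j) := by
  induction rs generalizing T with
  | nil => exact P.prop_of_iso ((HomologicalComplex.homologyFunctor _ _ _).mapIso
      ((tensorComplex K).mapIso (quotNilIso T).symm)) (hT j)
  | cons r rs ih =>
    obtain ⟨hr, hrs⟩ := (isWeaklyRegular_cons_iff T r rs).1 hrs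
    obtain ⟨⟨hr'⟩, hK⟩ := List.forall_mem_cons.1 hK
    refine P.prop_of_iso ((HomologicalComplex.homologyFunctor _ _ _).mapIso
      ((tensorComplex K).mapIso (quotConsIso T r rs).symm))
        (ih (T := ModuleCat.of R (QuotSMulTop r T)) hrs hK fun j => ?_)
    cases j with
    | zero =>
      have hS := shortExact_map_smulShortComplex_tensorComplex (K := K) hr
      have hmono := (hS.homology_exact₂ 0).mono_g (homologyMap_tensorComplex_smul_eq_zero hr' T 0)
      have := hS.epi_g
      have hepi := HomologicalComplex.epi_homologyMap_of_epi_of_not_rel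
        ((T.smulShortComplex r).map (tensorComplex K)).g 0 (by simp)
      have := isIso_of_mono_of_epi (HomologicalComplex.homologyMap
        ((T.smulShortComplex r).map (tensorComplex K)).g 0)
      let e := asIso (HomologicalComplex.homologyMap
        ((T.smulShortComplex r).map (tensorComplex K)).g 0)
      exact P.prop_of_iso e (hT 0)
    | succ j =>
      exact P.prop_X₂_of_shortExact (homologyQuotSMulTopShortComplex_shortExact hr hr' j)
        (hT _) (hT _)

end RegularSequence

end TensorComplex

section FiniteFree

open Abelian

variable {R : Type u} [CommRing R]

lemma prop_obj_of_finite_free {𝒞 : Type*} [Category* 𝒞] [Abelian 𝒞]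
    (F : ModuleCat.{u} R ⥤ 𝒞) [F.Additive] {P : ObjectProperty 𝒞} [P.ContainsZero]
    [P.IsClosedUnderIsomorphisms] [P.IsClosedUnderExtensions] (hP : P (F.obj (.of R R)))
    (X : ModuleCat.{u} R) [Module.Free R X] [Module.Finite R X] : P (F.obj X) := by
  have hpi (n : ℕ) : P (F.obj (.of R (Fin n → R))) := by
    induction n with
    | zero => exact P.prop_of_isZero (F.map_isZero (ModuleCat.isZero_of_subsingleton _))
    | succ n ih =>
      have := preservesBinaryBiproducts_of_preservesBiproducts F
      let e : ModuleCat.of R R ⊞ .of R (Fin n → R) ≅ .of R (Fin (n + 1) → R) :=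
        ModuleCat.biprodIsoProd (.of R R) (.of R (Fin n → R)) ≪≫
          (Fin.consLinearEquiv R fun _ : Fin (n + 1) => R).toModuleIso
      exact P.prop_of_iso ((F.mapBiprod _ _).symm ≪≫ F.mapIso e) (P.prop_biprod hP ih)
  let b := (Module.Free.chooseBasis R X).reindex (Fintype.equivFin _)
  exact P.prop_of_iso (F.mapIso b.equivFun.toModuleIso.symm) (hpi _)

lemma nonempty_retract_of_free (X : ModuleCat.{u} R) [Module.Free R X] [Nontrivial X] :
    Nonempty (Retract (ModuleCat.of R R) X) := by
  let b := Module.Free.chooseBasis R X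
  obtain ⟨i⟩ := b.index_nonempty
  exact ⟨{ i := ModuleCat.ofHom (LinearMap.toSpanSingleton R X (b i))
           r := ModuleCat.ofHom (b.coord i)
           retract := by ext; simp }⟩

lemma mem_smul_top_of_range_le {J : Ideal R} {X Y : Type*} [AddCommGroup X] [Module R X]
    [Module.Free R X] [Module.Finite R X] [AddCommGroup Y] [Module R Y] {f : X →ₗ[R] Y}
    (hf : LinearMap.range f ≤ J • ⊤) : f ∈ J • (⊤ : Submodule R (X →ₗ[R] Y)) := by
  let b := Module.Free.chooseBasis R X
  have hsum : f = ∑ i, LinearMap.smulRightₗ (b.coord i) (f (b i)) := b.ext fun i => by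
    simp [Finsupp.single_apply]
  rw [hsum]
  refine Submodule.sum_mem _ fun i _ => ?_
  have := Submodule.mem_map_of_mem (f := LinearMap.smulRightₗ (b.coord i))
    (hf ⟨b i, rfl⟩)
  rw [Submodule.map_smul''] at this
  exact Submodule.smul_mono le_rfl le_top this

lemma extGrade_le_of_retract {𝒜 : Type*} [Category* 𝒜] [Abelian 𝒜] [HasExt 𝒜] (k : 𝒜) {X Y : 𝒜}
    (h : Retract X Y) : extGrade k Y ≤ extGrade k X := by
  refine le_extGrade_iff.2 fun i hi => subsingleton_of_forall_eq 0 fun x => ?_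
  have := subsingleton_ext_of_lt_extGrade hi
  have hx : (x.comp (Ext.mk₀ h.i) (add_zero i)).comp (Ext.mk₀ h.r) (add_zero i) = x := by
    simp
  rw [← hx, Subsingleton.elim (x.comp _ _) 0, Ext.zero_comp]

lemma extFunctorObj_map_eq_zero_of_range_le {k : ModuleCat.{u} R} {J : Ideal R}
    (hJ : J ≤ Module.annihilator R k) (F : ModuleCat.{u} R ⥤ ModuleCat.{u} R) [F.Additive]
    [F.Linear R] {X Y : ModuleCat.{u} R} [Module.Free R X] [Module.Finite R X] {f : X ⟶ Y}
    (hf : LinearMap.range f.hom ≤ J • ⊤) (n : ℕ) : (extFunctorObj k n).map (F.map f) = 0 := by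
  refine Submodule.smul_induction_on (mem_smul_top_of_range_le hf)
    (p := fun g => (extFunctorObj k n).map (F.map (ModuleCat.ofHom g)) = 0)
    (fun r hr g _ => ?_) fun g g' hg hg' => ?_
  · rw [extFunctorObj_map_eq_zero_iff]
    intro x
    have hr0 := congr($(Ext.postcomp_smul_id_eq_zero_of_mem_annihilator (M := F.obj Y) (hJ hr) n)
      (x.comp (Ext.mk₀ (F.map (ModuleCat.ofHom g))) (add_zero n)))
    have hmap : F.map (ModuleCat.ofHom (r • g)) = r • F.map (ModuleCat.ofHom g) :=
      F.map_smul r (ModuleCat.ofHom g)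
    simpa [hmap, Ext.mk₀_smul] using hr0
  · rw [ModuleCat.ofHom_add, F.map_add, Functor.map_add, hg, hg', add_zero]

end FiniteFree

section RelativeFlatness

open ZeroObject MonoidalCategory

variable {R : Type u} [CommRing R]

/-- The class of modules annihilated by the ideal `I`. -/
def isTorsionBy (I : Ideal R) : ObjectProperty (ModuleCat.{u} R) :=
  fun X => Module.IsTorsionBySet R X I

variable {I : Ideal R}

instance : (isTorsionBy I).IsClosedUnderQuotients where
  prop_of_epi f _ hX y a := by
    obtain ⟨x, rfl⟩ := (ModuleCat.epi_iff_surjective f).1 inferInstance y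
    rw [← map_smul, hX, map_zero]

instance : (isTorsionBy I).IsClosedUnderSubobjects where
  prop_of_mono f _ hX x a := (ModuleCat.mono_iff_injective f).1 inferInstance (by
    rw [map_smul, hX, map_zero])

lemma isTorsionBy_homology {K : ChainComplex (ModuleCat.{u} R) ℕ} (hK : ∀ i, isTorsionBy I (K.X i))
    (i : ℕ) : isTorsionBy I (K.homology i) :=
  (isTorsionBy I).prop_of_epi (K.homologyπ i) ((isTorsionBy I).prop_of_mono (K.iCycles i) (hK i))

lemma isTorsionBy_tensorObj {X : ModuleCat.{u} R} (hX : isTorsionBy I X) (Y : ModuleCat.{u} R) :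
    isTorsionBy I (X ⊗ Y) := fun z a => by
  induction z using TensorProduct.induction_on with
  | zero => exact smul_zero _
  | tmul x y => exact (TensorProduct.smul_tmul' _ _ _).trans (by rw [hX, TensorProduct.zero_tmul])
  | add z z' hz hz' => rw [smul_add, hz, hz', add_zero]

/-- A complex `L` whose terms are flat relative to modules annihilated by `I`; a complex of flat
`R ⧸ I`-modules, viewed over `R`, is the typical example. -/
def IsFlatOnTorsion (I : Ideal R) (L : ChainComplex (ModuleCat.{u} R) ℕ) : Prop :=
  ∀ S : ShortComplex (ModuleCat.{u} R), S.ShortExact → isTorsionBy I S.X₂ →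
    (S.map (tensorComplex L)).ShortExact

variable {L : ChainComplex (ModuleCat.{u} R) ℕ} (hL : IsFlatOnTorsion I L) {N : ModuleCat.{u} R}
  (α : tensorComplex L ⋙ HomologicalComplex.homologyFunctor _ _ 0 ≅ tensorRight N)

/-- The modules `X` which, if annihilated by `I`, are Tor-independent of `N` over `R ⧸ I` and
satisfy `depth (X ⊗ N) ≥ t`. -/
def acyclicOfGradeAtLeast (I : Ideal R) (L : ChainComplex (ModuleCat.{u} R) ℕ)
    (k N : ModuleCat.{u} R) (t : ℕ∞) : ObjectProperty (ModuleCat.{u} R) := fun X =>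
  isTorsionBy I X → IsHigherAcyclic (tensorComplex L) X ∧ t ≤ extGrade k (X ⊗ N)

instance {k : ModuleCat.{u} R} {t : ℕ∞} :
    (acyclicOfGradeAtLeast I L k N t).IsClosedUnderIsomorphisms where
  of_iso e hX hY := by
    obtain ⟨h, h'⟩ := hX ((isTorsionBy I).prop_of_iso e.symm hY)
    exact ⟨fun i => (h i).of_iso ((tensorComplex L).mapIso e),
      h'.trans_eq (extGrade_congr (whiskerRightIso e N))⟩

instance {k : ModuleCat.{u} R} {t : ℕ∞} : (acyclicOfGradeAtLeast I L k N t).ContainsZero where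
  exists_zero := ⟨0, isZero_zero _, fun _ =>
    ⟨fun _ => .of_isZero (HomologicalComplex.eval _ _ _ |>.map_isZero
      ((tensorComplex L).map_isZero (isZero_zero _))),
    le_top.trans_eq
      (extGrade_eq_top_of_isZero ((tensorRight N).map_isZero (isZero_zero _))).symm⟩⟩

include hL α in
lemma isClosedUnderExtensions_acyclicOfGradeAtLeast (k : ModuleCat.{u} R) (t : ℕ∞) :
    (acyclicOfGradeAtLeast I L k N t).IsClosedUnderExtensions where
  prop_X₂_of_shortExact {S} hS h₁ h₃ h₂ := by
    have := hS.mono_f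
    have := hS.epi_g
    obtain ⟨h₁, h₁'⟩ := h₁ ((isTorsionBy I).prop_of_mono S.f h₂)
    obtain ⟨h₃, h₃'⟩ := h₃ ((isTorsionBy I).prop_of_epi S.g h₂)
    exact ⟨h₁.X₂ (hL _ hS h₂) h₃,
      le_extGrade_X₂ (shortExact_map_of_isHigherAcyclic (hL _ hS h₂) α hS h₃) h₁' h₃'⟩

variable (R) in
/-- The tensor product of a complex with the ring itself. -/
def tensorComplexSelfIso (K : ChainComplex (ModuleCat.{u} R) ℕ) :
    (tensorComplex K).obj (.of R R) ≅ K :=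
  (NatIso.mapHomologicalComplex (leftUnitorNatIso (ModuleCat.{u} R)) _).app K

end RelativeFlatness

section ProjectiveResolution

variable {R : Type u} [CommRing R] {M : ModuleCat.{u} R}

lemma nonempty_homotopy_smul_id_zero (P : ProjectiveResolution M) {r : R}
    (hr : ∀ m : M, r • m = 0) : Nonempty (Homotopy (r • 𝟙 P.complex) 0) := by
  refine ⟨P.liftHomotopyZero _ (HomologicalComplex.to_single_hom_ext ?_)⟩
  ext x
  exact ((P.π.f 0).hom.map_smul r x).trans (hr _)

lemma exactAt_tensorComplex_self_of_pos (P : ProjectiveResolution M) {j : ℕ} (hj : 0 < j) :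
    ((tensorComplex P.complex).obj (.of R R)).ExactAt j := by
  obtain ⟨j, rfl⟩ := Nat.exists_eq_succ_of_ne_zero hj.ne'
  exact (P.complex_exactAt_succ j).of_iso (tensorComplexSelfIso R _).symm

/-- A resolution tensored with the ring itself has the resolved module as its `0`-th homology. -/
def homologyZeroTensorComplexSelfIso (P : ProjectiveResolution M) :
    ((tensorComplex P.complex).obj (.of R R)).homology 0 ≅ M :=
  (HomologicalComplex.homologyFunctor _ _ 0).mapIso (tensorComplexSelfIso R _) ≪≫
    isoOfQuasiIsoAt P.π 0 ≪≫ HomologicalComplex.singleObjHomologySelfIso _ 0 M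

instance (P : ProjectiveResolution M) (i : ℕ) : Module.Projective R (P.complex.X i) :=
  (IsProjective.iff_projective _).2 (P.projective i)

end ProjectiveResolution

section AuslanderBuchsbaum

open MonoidalCategory

variable {R : Type u} [CommRing R]

/-- The cyclic module `R ⧸ (rs)`. -/
abbrev quotientModule (rs : List R) : ModuleCat.{u} R :=
  .of R (R ⧸ (Ideal.ofList rs • ⊤ : Submodule R R))

lemma isTorsionBy_quotientModule (rs : List R) :
    isTorsionBy (Ideal.ofList rs) (quotientModule rs) := fun x r => by
  obtain ⟨x, rfl⟩ := Submodule.Quotient.mk_surjective _ x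
  exact (Submodule.Quotient.mk_eq_zero _).2 (Submodule.smul_mem_smul r.2 trivial)

lemma isHigherAcyclic_tensorObj_of_free {L : ChainComplex (ModuleCat.{u} R) ℕ} {A : ModuleCat.{u} R}
    (hA : IsHigherAcyclic (tensorComplex L) A) (X : ModuleCat.{u} R) [Module.Free R X]
    [Module.Finite R X] : IsHigherAcyclic (tensorComplex L) (A ⊗ X) := fun i => by
  have hself : IsHigherAcyclic (tensorComplex L) (A ⊗ .of R R) := fun i =>
    (hA i).of_iso ((tensorComplex L).mapIso (ρ_ A).symm)
  exact (HomologicalComplex.exactAt_iff_isZero_homology _ _).2 (prop_obj_of_finite_free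
    (tensorLeft A ⋙ tensorComplex L ⋙ HomologicalComplex.homologyFunctor _ _ (i + 1)) (P := IsZero)
    ((HomologicalComplex.exactAt_iff_isZero_homology _ _).1 (hself i)) X)

lemma extGrade_le_tensorObj_of_free (k A N : ModuleCat.{u} R) (X : ModuleCat.{u} R)
    [Module.Free R X] [Module.Finite R X] : extGrade k (A ⊗ N) ≤ extGrade k ((A ⊗ X) ⊗ N) :=
  prop_obj_of_finite_free (tensorLeft A ⋙ tensorRight N)
    (P := gradeAtLeast k (extGrade k (A ⊗ N)))
    (extGrade_congr (whiskerRightIso (ρ_ A) N)).ge X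

lemma extGrade_tensorObj_of_free (k A N : ModuleCat.{u} R) (X : ModuleCat.{u} R)
    [Module.Free R X] [Module.Finite R X] [Nontrivial X] :
    extGrade k ((A ⊗ X) ⊗ N) = extGrade k (A ⊗ N) :=
  ((extGrade_le_of_retract k ((nonempty_retract_of_free X).some.map
    (tensorLeft A ⋙ tensorRight N))).trans_eq
      (extGrade_congr (whiskerRightIso (ρ_ A) N))).antisymm
    (extGrade_le_tensorObj_of_free k A N X)

variable {M : ModuleCat.{u} R} {rs : List R} (hrs : IsWeaklyRegular R rs)
  (P : ProjectiveResolution M) (hM : isTorsionBy (Ideal.ofList rs) M)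

include hrs in
lemma exactAt_tensorComplex_quotientModule {j : ℕ} (hj : rs.length < j) :
    ((tensorComplex P.complex).obj (quotientModule rs)).ExactAt j :=
  exactAt_tensorComplex_quotient (T := .of R R) (c := 0) hrs
    (fun _ => exactAt_tensorComplex_self_of_pos P) j (by simpa using hj)

include hrs hM

lemma nonempty_homology_tensorComplex_quotientModule_iso :
    Nonempty (((tensorComplex P.complex).obj (quotientModule rs)).homology rs.length ≅ M) := by
  obtain ⟨e⟩ := nonempty_homology_tensorComplex_quotient_iso (T := .of R R) (c := 0) hrs
    (fun r hr => nonempty_homotopy_smul_id_zero P fun m => @hM m ⟨r, Ideal.subset_span hr⟩)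
    fun _ => exactAt_tensorComplex_self_of_pos P
  rw [zero_add] at e
  exact ⟨e ≪≫ homologyZeroTensorComplexSelfIso P⟩

lemma prop_homology_tensorComplex_quotientModule {T : ObjectProperty (ModuleCat.{u} R)}
    [T.IsClosedUnderIsomorphisms] [T.IsClosedUnderExtensions] [T.ContainsZero] (hT : T M) (j : ℕ) :
    T (((tensorComplex P.complex).obj (quotientModule rs)).homology j) := by
  refine prop_homology_tensorComplex_quotient (T := .of R R) hrs
    (fun r hr => nonempty_homotopy_smul_id_zero P fun m => @hM m ⟨r, Ideal.subset_span hr⟩)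
    (fun j => ?_) j
  obtain rfl | hj := j.eq_zero_or_pos
  · exact T.prop_of_iso (homologyZeroTensorComplexSelfIso P).symm hT
  · exact T.prop_of_isZero ((HomologicalComplex.exactAt_iff_isZero_homology _ _).1
      (exactAt_tensorComplex_self_of_pos P hj))

variable {N : ModuleCat.{u} R} {L : ChainComplex (ModuleCat.{u} R) ℕ}
  (hL : IsFlatOnTorsion (Ideal.ofList rs) L)
  (α : tensorComplex L ⋙ HomologicalComplex.homologyFunctor _ _ 0 ≅ tensorRight N)
  (hLA : IsHigherAcyclic (tensorComplex L) (quotientModule rs))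
  (hLM : IsHigherAcyclic (tensorComplex L) M)

include hL α hLM

lemma isHigherAcyclic_homology_and_le (k : ModuleCat.{u} R) (j : ℕ) :
    IsHigherAcyclic (tensorComplex L)
        (((tensorComplex P.complex).obj (quotientModule rs)).homology j) ∧
      extGrade k (M ⊗ N) ≤
        extGrade k (((tensorComplex P.complex).obj (quotientModule rs)).homology j ⊗ N) := by
  have := isClosedUnderExtensions_acyclicOfGradeAtLeast hL α k (extGrade k (M ⊗ N))
  exact prop_homology_tensorComplex_quotientModule hrs P hM
    (T := acyclicOfGradeAtLeast (Ideal.ofList rs) L k N (extGrade k (M ⊗ N)))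
    (fun _ => ⟨hLM, le_rfl⟩) j
    (isTorsionBy_homology (fun i => isTorsionBy_tensorObj (isTorsionBy_quotientModule rs) _) j)

variable (hfree : ∀ i, Module.Free R (P.complex.X i)) (hfin : ∀ i, Module.Finite R (P.complex.X i))
include hLA hfree hfin

lemma nonempty_homology_map_tensorComplex_quotientModule_iso (i : ℕ) :
    Nonempty ((((tensorRight N).mapHomologicalComplex _).obj
      ((tensorComplex P.complex).obj (quotientModule rs))).homology i ≅
        ((tensorComplex P.complex).obj (quotientModule rs)).homology i ⊗ N) :=
  nonempty_homology_map_iso hL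
    (fun i => isTorsionBy_tensorObj (isTorsionBy_quotientModule rs) (P.complex.X i))
    (fun i => isHigherAcyclic_tensorObj_of_free hLA (P.complex.X i))
    (fun i => (isHigherAcyclic_homology_and_le hrs P hM hL α hLM (.of R R) i).1) α i

/-- A form of the Auslander-Buchsbaum formula: `p` is the projective dimension of `M` over `R`, and
`hLM` is the Tor-independence of `M` and `N` over `R ⧸ (rs)`. -/
theorem extGrade_add_length_eq {k : ModuleCat.{u} R} {J : Ideal R} (hJ : J ≤ Module.annihilator R k)
    (hd : ∀ i j, LinearMap.range (P.complex.d i j).hom ≤ J • (⊤ : Submodule R (P.complex.X j)))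
    {p : ℕ} (hp : Nontrivial (P.complex.X p)) (hp' : ∀ i > p, IsZero (P.complex.X i)) {d t : ℕ}
    (hA : extGrade k (quotientModule rs ⊗ N) = d) (ht : extGrade k (M ⊗ N) = t) :
    d + rs.length = p + t := by
  have hH := nonempty_homology_map_tensorComplex_quotientModule_iso hrs P hM hL α hLA hLM
    hfree hfin
  let F := tensorLeft (quotientModule rs) ⋙ tensorRight N
  let K := ((tensorRight N).mapHomologicalComplex _).obj
    ((tensorComplex P.complex).obj (quotientModule rs))
  refine add_eq_add_of_extGrade_homology (k := k) (K := K) (fun i => ?_) ?_ (fun i hi => ?_)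
    (fun j => ?_) (fun i => ?_) ?_ (fun i hi => ?_)
  · exact hA.symm.trans_le (extGrade_le_tensorObj_of_free k _ N (P.complex.X i))
  · exact (extGrade_tensorObj_of_free k _ N (P.complex.X p)).trans hA
  · exact F.map_isZero (hp' i hi)
  · exact extFunctorObj_map_eq_zero_of_range_le hJ F (hd p j) d
  · rw [← ht, extGrade_congr (hH i).some]
    exact (isHigherAcyclic_homology_and_le hrs P hM hL α hLM k i).2
  · obtain ⟨e⟩ := nonempty_homology_tensorComplex_quotientModule_iso hrs P hM
    exact ((extGrade_congr (hH _).some).trans (extGrade_congr (whiskerRightIso e N))).trans ht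
  · exact ((tensorRight N).map_isZero ((HomologicalComplex.exactAt_iff_isZero_homology _ _).1
      (exactAt_tensorComplex_quotientModule hrs P hi))).of_iso (hH i).some

end AuslanderBuchsbaum

section SyzygyComplex

variable {R : Type u} [CommRing R] {F : ModuleCat.{u} R → ModuleCat.{u} R} (π : ∀ X, F X ⟶ X)
  (M : ModuleCat.{u} R)

/-- The iterated syzygies of `M` with respect to a choice `π` of covers. -/
def syzygy : ℕ → ModuleCat.{u} R
  | 0 => M
  | n + 1 => .of R (LinearMap.ker (π (syzygy n)).hom)

/-- The cover of the `n + 1`-st syzygy, composed with the inclusion of that syzygy. -/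
abbrev syzygyDifferential (n : ℕ) : F (syzygy π M (n + 1)) ⟶ F (syzygy π M n) :=
  π (syzygy π M (n + 1)) ≫ ModuleCat.ofHom (LinearMap.ker (π _).hom).subtype

/-- The complex of the covers of the iterated syzygies of `M`. -/
def syzygyComplex : ChainComplex (ModuleCat.{u} R) ℕ :=
  ChainComplex.of (fun n => F (syzygy π M n)) (syzygyDifferential π M) fun n => by
    ext x
    have h : π (syzygy π M (n + 1)) (π (syzygy π M (n + 2)) x).1 = 0 := (π _ x).2
    exact congrArg Subtype.val h

lemma syzygyComplex_d_apply (n : ℕ) (x : F (syzygy π M (n + 1))) :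
    (syzygyComplex π M).d (n + 1) n x = (π (syzygy π M (n + 1)) x).1 :=
  congr($(ChainComplex.of_d (fun n => F (syzygy π M n)) (syzygyDifferential π M) n) x)

variable {π}

lemma range_syzygyComplex_d (hπ : ∀ X, Function.Surjective (π X)) (n : ℕ) :
    LinearMap.range ((syzygyComplex π M).d (n + 1) n).hom =
      LinearMap.ker (π (syzygy π M n)).hom := by
  ext y
  constructor
  · rintro ⟨x, rfl⟩
    have h : π (syzygy π M n) (π (syzygy π M (n + 1)) x).1 = 0 := (π (syzygy π M (n + 1)) x).2
    exact (congrArg (π (syzygy π M n)) (syzygyComplex_d_apply π M n x)).trans h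
  · intro hy
    obtain ⟨x, hx⟩ := hπ (syzygy π M (n + 1)) ⟨y, hy⟩
    exact ⟨x, (syzygyComplex_d_apply π M n x).trans (congrArg Subtype.val hx)⟩

lemma syzygyComplex_exactAt_succ (hπ : ∀ X, Function.Surjective (π X)) (n : ℕ) :
    (syzygyComplex π M).ExactAt (n + 1) := by
  rw [HomologicalComplex.exactAt_iff' _ (n + 2) (n + 1) n (by simp) (by simp),
    ShortComplex.moduleCat_exact_iff]
  intro x hx
  have h : π (syzygy π M (n + 1)) x = 0 :=
    Subtype.ext ((syzygyComplex_d_apply π M n x).symm.trans hx)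
  exact (range_syzygyComplex_d M hπ (n + 1)).ge h

/-- The resolution of `M` by the covers of its iterated syzygies. -/
def syzygyResolution [∀ X, Projective (F X)] (hπ : ∀ X, Function.Surjective (π X)) :
    ProjectiveResolution M where
  complex := syzygyComplex π M
  projective n := inferInstanceAs (Projective (F _))
  π := (ChainComplex.toSingle₀Equiv _ _).symm ⟨π M, by
    ext x
    exact (range_syzygyComplex_d M hπ 0).le ⟨x, rfl⟩⟩
  quasiIso := ⟨fun n => by
    cases n with
    | zero =>
      rw [ChainComplex.quasiIsoAt₀_iff, ShortComplex.quasiIso_iff_of_zeros' _ rfl rfl rfl]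
      refine ⟨(ShortComplex.moduleCat_exact_iff _).2 fun x hx => ?_, ?_⟩
      · exact (range_syzygyComplex_d M hπ 0).ge hx
      · exact (ModuleCat.epi_iff_surjective _).2 (hπ M)
    | succ n =>
      rw [quasiIsoAt_iff_exactAt']
      · exact syzygyComplex_exactAt_succ M hπ n
      · exact ChainComplex.exactAt_succ_single_obj _ _⟩

end SyzygyComplex

section MinimalResolution

open TensorProduct

variable {R : Type u} [CommRing R] [IsLocalRing R]

lemma exists_minimal_cover (X : Type u) [AddCommGroup X] [Module R X] [Module.Finite R X] :
    ∃ (n : ℕ) (φ : (Fin n → R) →ₗ[R] X), Function.Surjective φ ∧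
      LinearMap.ker φ ≤ IsLocalRing.maximalIdeal R • ⊤ := by
  let k := IsLocalRing.ResidueField R
  let w := Module.finBasis k (k ⊗[R] X)
  obtain ⟨v, hv⟩ := (TensorProduct.mk_surjective R X k Ideal.Quotient.mk_surjective).comp_left w
  refine ⟨_, Fintype.linearCombination R v, ?_, fun y hy => ?_⟩
  · rw [← LinearMap.range_eq_top, Fintype.range_linearCombination]
    exact IsLocalRing.span_eq_top_of_tmul_eq_basis _ w (congr_fun hv)
  · have hsum : ∑ i, algebraMap R k (y i) • w i =
        (1 : k) ⊗ₜ[R] Fintype.linearCombination R v y := by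
      simp [← hv, Fintype.linearCombination_apply, TensorProduct.tmul_sum]
    rw [LinearMap.mem_ker.1 hy, TensorProduct.tmul_zero] at hsum
    rw [pi_eq_sum_univ' y]
    exact Submodule.sum_mem _ fun i _ => Submodule.smul_mem_smul
      ((IsLocalRing.residue_eq_zero_iff _).1
        (Fintype.linearIndependent_iff.1 w.linearIndependent _ hsum i)) trivial

lemma exists_cover (X : ModuleCat.{u} R) :
    ∃ (F : ModuleCat.{u} R) (π : F ⟶ X), Projective F ∧ Function.Surjective π ∧
      (Module.Finite R X → Module.Free R F ∧ Module.Finite R F ∧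
        LinearMap.ker π.hom ≤ IsLocalRing.maximalIdeal R • ⊤) := by
  by_cases h : Module.Finite R X
  · obtain ⟨n, φ, hφ, hker⟩ := exists_minimal_cover (R := R) X
    exact ⟨.of R (Fin n → R), ModuleCat.ofHom φ, (IsProjective.iff_projective _).1 inferInstance,
      hφ, fun _ => ⟨inferInstanceAs (Module.Free R (Fin n → R)),
        inferInstanceAs (Module.Finite R (Fin n → R)), hker⟩⟩
  · exact ⟨Projective.over X, Projective.π X, inferInstance,
      (ModuleCat.epi_iff_surjective _).1 inferInstance, fun h' => (h h').elim⟩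

theorem exists_minimal_resolution [IsNoetherianRing R] (M : ModuleCat.{u} R) [Module.Finite R M] :
    ∃ P : ProjectiveResolution M, (∀ i, Module.Free R (P.complex.X i)) ∧
      (∀ i, Module.Finite R (P.complex.X i)) ∧ ∀ i j, LinearMap.range (P.complex.d i j).hom ≤
        IsLocalRing.maximalIdeal R • (⊤ : Submodule R (P.complex.X j)) := by
  choose F π hF hπ hmin using exists_cover (R := R)
  have hfin (n : ℕ) : Module.Finite R (syzygy π M n) := by
    induction n with
    | zero => assumption
    | succ n ih =>
      obtain ⟨-, _, -⟩ := hmin _ ih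
      exact inferInstanceAs (Module.Finite R (LinearMap.ker (π (syzygy π M n)).hom))
  refine ⟨syzygyResolution M hπ, fun i => (hmin _ (hfin i)).1, fun i => (hmin _ (hfin i)).2.1,
    fun i j => ?_⟩
  by_cases hij : j + 1 = i
  · subst hij
    exact (range_syzygyComplex_d M hπ j).trans_le (hmin _ (hfin j)).2.2
  · rw [(syzygyResolution M hπ).complex.shape i j hij]
    simp

end MinimalResolution

section FiniteResolution

open MonoidalCategory

variable {R : Type u} [CommRing R] {A : ModuleCat.{u} R} {J : Ideal R}

lemma whiskerLeft_eq_zero_of_range_le (hA : isTorsionBy J A) {X Y : ModuleCat.{u} R} {f : X ⟶ Y}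
    (hf : LinearMap.range f.hom ≤ J • ⊤) : A ◁ f = 0 := by
  have htmul {y : Y} (hy : y ∈ J • (⊤ : Submodule R Y)) (a : A) : a ⊗ₜ[R] y = 0 := by
    refine Submodule.smul_induction_on hy (fun r hr y _ => ?_) fun y y' h h' => ?_
    · rw [TensorProduct.tmul_smul, TensorProduct.smul_tmul', @hA a ⟨r, hr⟩,
        TensorProduct.zero_tmul]
    · rw [TensorProduct.tmul_add, h, h', add_zero]
  exact ModuleCat.MonoidalCategory.tensor_ext fun a x => htmul (hf ⟨x, rfl⟩) a

lemma subsingleton_of_isZero_tensorObj [Nontrivial A] {X : ModuleCat.{u} R} [Module.Free R X]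
    (hX : IsZero (A ⊗ X)) : Subsingleton X := by
  by_contra h
  have := not_subsingleton_iff_nontrivial.1 h
  let e := (nonempty_retract_of_free X).some.map (tensorLeft A)
  have := ModuleCat.subsingleton_of_isZero ((IsZero.of_mono e.i hX).of_iso (ρ_ A).symm)
  exact not_subsingleton A this

variable {M : ModuleCat.{u} R} {rs : List R} (hrs : IsWeaklyRegular R rs)
  (P : ProjectiveResolution M) [∀ i, Module.Free R (P.complex.X i)]
  (hd : ∀ i j, LinearMap.range (P.complex.d i j).hom ≤
    Ideal.ofList rs • (⊤ : Submodule R (P.complex.X j)))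

include hrs hd

lemma subsingleton_of_length_lt [Nontrivial (quotientModule rs)] {i : ℕ} (hi : rs.length < i) :
    Subsingleton (P.complex.X i) :=
  subsingleton_of_isZero_tensorObj (A := quotientModule rs)
    ((exactAt_tensorComplex_quotientModule hrs P hi).isZero_X₂
      (whiskerLeft_eq_zero_of_range_le (isTorsionBy_quotientModule rs) (hd _ _))
      (whiskerLeft_eq_zero_of_range_le (isTorsionBy_quotientModule rs) (hd _ _)))

lemma exists_last_nontrivial_term [Nontrivial (quotientModule rs)] [Nontrivial M] :
    ∃ p, Nontrivial (P.complex.X p) ∧ ∀ i > p, IsZero (P.complex.X i) := by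
  let s : Set ℕ := {i | Nontrivial (P.complex.X i)}
  have : Nontrivial (((ChainComplex.single₀ _).obj M).X 0) := inferInstanceAs (Nontrivial M)
  have hs : s.Nonempty := ⟨0, ((ModuleCat.epi_iff_surjective (P.π.f 0)).1 inferInstance).nontrivial⟩
  have hs' : BddAbove s := ⟨rs.length, fun i (hi : Nontrivial _) => by
    by_contra! h
    exact not_subsingleton (P.complex.X i) (subsingleton_of_length_lt hrs P hd h)⟩
  refine ⟨sSup s, Nat.sSup_mem hs hs', fun i hi => ?_⟩
  have hi : i ∉ s := notMem_of_csSup_lt hi hs'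
  have := not_nontrivial_iff_subsingleton.1 hi
  exact ModuleCat.isZero_of_subsingleton _

end FiniteResolution

section HomologyZero

open MonoidalCategory

variable {R : Type u} [CommRing R] {K : ChainComplex (ModuleCat.{u} R) ℕ}

/-- By right exactness of the tensor product, `H₀(X ⊗ K)` is `X ⊗ H₀(K)`, with `H₀(K)` given as a
cokernel `c` of `K₁ ⟶ K₀`. -/
def homologyZeroTensorComplexIso {c : CokernelCofork (K.d 1 0)} (hc : IsColimit c) :
    tensorComplex K ⋙ HomologicalComplex.homologyFunctor _ _ 0 ≅ tensorRight c.pt :=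
  NatIso.ofComponents (fun X => ((tensorComplex K).obj X).isoHomologyι₀ ≪≫
    (((tensorComplex K).obj X).opcyclesIsCokernel 1 0 (by simp)).coconePointUniqueUpToIso
      (CokernelCofork.mapIsColimit c hc (tensorLeft X))) fun {X Y} f => by
    have hp (X : ModuleCat.{u} R) := IsColimit.comp_coconePointUniqueUpToIso_hom
      (((tensorComplex K).obj X).opcyclesIsCokernel 1 0 (by simp))
        (CokernelCofork.mapIsColimit c hc (tensorLeft X)) WalkingParallelPair.one
    have hnat := HomologicalComplex.homologyι_naturality ((tensorComplex K).map f) 0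
    refine (Category.assoc _ _ _).symm.trans ((congrArg (· ≫ _) hnat).trans ?_)
    refine (Category.assoc _ _ _).trans (Eq.trans (congrArg _ ?_) (Category.assoc _ _ _).symm)
    rw [← cancel_epi (((tensorComplex K).obj X).pOpcycles 0)]
    refine (HomologicalComplex.p_opcyclesMap_assoc _ _ _).trans ?_
    refine (congrArg _ (hp Y)).trans ((whisker_exchange f c.π).symm.trans ?_)
    exact (congrArg (· ≫ _) (hp X).symm).trans (Category.assoc _ _ _)

end HomologyZero

section Monoidal

open MonoidalCategory

variable {R Q : Type u} [CommRing R] [CommRing Q] (G : ModuleCat.{u} R ⥤ ModuleCat.{u} Q)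
  [G.LaxMonoidal] [∀ X Y, IsIso (Functor.LaxMonoidal.μ G X Y)]

/-- The isomorphism `G X ⊗ G Y ≅ G (X ⊗ Y)`, natural in `Y`. -/
def mapTensorLeftIso (X : ModuleCat.{u} R) : G ⋙ tensorLeft (G.obj X) ≅ tensorLeft X ⋙ G :=
  NatIso.ofComponents (fun Y => asIso (Functor.LaxMonoidal.μ G X Y))
    fun f => Functor.LaxMonoidal.μ_natural_right G X f

variable {M N : ModuleCat.{u} R} {rs : List Q} (e : G.obj (𝟙_ _) ≅ quotientModule rs)

/-- Since `G` maps the unit to `Q ⧸ (rs)`, tensoring `G N` with `Q ⧸ (rs)` changes nothing. -/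
def quotientModuleTensorIso (N : ModuleCat.{u} R) : quotientModule rs ⊗ G.obj N ≅ G.obj N :=
  whiskerRightIso e.symm _ ≪≫ (mapTensorLeftIso G (𝟙_ _)).app N ≪≫ G.mapIso (λ_ N)

include e in
lemma isTorsionBy_obj : isTorsionBy (Ideal.ofList rs) (G.obj M) :=
  ObjectProperty.prop_of_iso _ (quotientModuleTensorIso G e M)
    (isTorsionBy_tensorObj (isTorsionBy_quotientModule rs) _)

variable [G.Additive]

/-- The isomorphism of complexes `G X ⊗ G K ≅ G (X ⊗ K)`. -/
def mapTensorComplexIso (X : ModuleCat.{u} R) (K : ChainComplex (ModuleCat.{u} R) ℕ) :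
    (tensorComplex ((G.mapHomologicalComplex _).obj K)).obj (G.obj X) ≅
      (G.mapHomologicalComplex _).obj ((tensorComplex K).obj X) :=
  (NatIso.mapHomologicalComplex (mapTensorLeftIso G X) _).app K

variable [PreservesFiniteLimits G] [PreservesFiniteColimits G]

lemma isHigherAcyclic_map {K : ChainComplex (ModuleCat.{u} R) ℕ}
    (h : IsHigherAcyclic (tensorComplex K) M) :
    IsHigherAcyclic (tensorComplex ((G.mapHomologicalComplex _).obj K)) (G.obj M) := fun i =>
  have hG : ((G.mapHomologicalComplex _).obj ((tensorComplex K).obj M)).ExactAt (i + 1) :=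
    (h i).map G
  hG.of_iso (mapTensorComplexIso G M K).symm

lemma isHigherAcyclic_self (P : ProjectiveResolution N) :
    IsHigherAcyclic (tensorComplex P.complex) (𝟙_ (ModuleCat.{u} R)) :=
  fun _ => exactAt_tensorComplex_self_of_pos P (Nat.succ_pos _)

variable (hrs : IsWeaklyRegular Q rs)
  (hG : ∀ (K : ChainComplex (ModuleCat.{u} R) ℕ) [∀ i, Module.Flat R (K.X i)],
    IsFlatOnTorsion (Ideal.ofList rs) ((G.mapHomologicalComplex _).obj K))

include hrs e hG in
theorem extGrade_add_length_eq_of_isHigherAcyclic (P : ProjectiveResolution N)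
    (h : IsHigherAcyclic (tensorComplex P.complex) M) (P' : ProjectiveResolution (G.obj M))
    (hfree : ∀ i, Module.Free Q (P'.complex.X i)) (hfin : ∀ i, Module.Finite Q (P'.complex.X i))
    {k : ModuleCat.{u} Q} {J : Ideal Q} (hJ : J ≤ Module.annihilator Q k)
    (hd : ∀ i j, LinearMap.range (P'.complex.d i j).hom ≤ J • (⊤ : Submodule Q (P'.complex.X j)))
    {p : ℕ} (hp : Nontrivial (P'.complex.X p)) (hp' : ∀ i > p, IsZero (P'.complex.X i)) {d t : ℕ}
    (hN : extGrade k (G.obj N) = d) (hMN : extGrade k (G.obj (M ⊗ N)) = t) :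
    d + rs.length = p + t :=
  extGrade_add_length_eq hrs P' (isTorsionBy_obj G e) (hG P.complex)
    (homologyZeroTensorComplexIso (CokernelCofork.mapIsColimit _ P.isColimitCokernelCofork G))
    (fun i => (isHigherAcyclic_map G (isHigherAcyclic_self P) i).of_iso
      ((tensorComplex _).mapIso e))
    (isHigherAcyclic_map G h) hfree hfin hJ hd hp hp'
    ((extGrade_congr (quotientModuleTensorIso G e N)).trans hN)
    ((extGrade_congr ((mapTensorLeftIso G M).app N)).trans hMN)

end Monoidal

section RestrictScalars

open MonoidalCategory ModuleCat

variable {A Q : Type u} [CommRing A] [CommRing Q] {g : Q →+* A} (hg : Function.Surjective g)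
include hg

lemma isIso_μ_restrictScalars (X Y : ModuleCat.{u} A) :
    IsIso (Functor.LaxMonoidal.μ (restrictScalars.{u} g) X Y) := by
  algebraize [g]
  have : IsScalarTower Q A ((restrictScalars.{u} g).obj X) :=
    ⟨fun q a x => mul_smul (g q) a (show X from x)⟩
  have : IsScalarTower Q A ((restrictScalars.{u} g).obj Y) :=
    ⟨fun q a x => mul_smul (g q) a (show Y from x)⟩
  have := TensorProduct.CompatibleSMul.of_algebraMap_surjective ((restrictScalars.{u} g).obj X)
    ((restrictScalars.{u} g).obj Y) hg
  let e := TensorProduct.equivOfCompatibleSMul A Q Q ((restrictScalars.{u} g).obj X)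
    ((restrictScalars.{u} g).obj Y)
  have hμ : (Functor.LaxMonoidal.μ (restrictScalars.{u} g) X Y).hom = e.toLinearMap :=
    TensorProduct.ext' (restrictScalars_μ_tmul g X Y)
  rw [ConcreteCategory.isIso_iff_bijective]
  exact (congrArg DFunLike.coe hμ :) ▸ e.bijective

lemma full_restrictScalars : (restrictScalars.{u} g).Full where
  map_surjective {X Y} f := by
    refine ⟨ofHom { f.hom.toAddMonoidHom with map_smul' := fun a x => ?_ }, ?_⟩
    · obtain ⟨q, rfl⟩ := hg a
      exact f.hom.map_smul q x
    · rfl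

lemma exists_restrictScalars_iso {X : ModuleCat.{u} Q} (hX : isTorsionBy (RingHom.ker g) X) :
    ∃ Y : ModuleCat.{u} A, Nonempty ((restrictScalars g).obj Y ≅ X) := by
  let : Module (Q ⧸ RingHom.ker g) X := Module.IsTorsionBySet.module hX
  let : Module A X := Module.compHom X (RingHom.quotientKerEquivOfSurjective hg).symm.toRingHom
  let Y : ModuleCat.{u} A := .of A X
  have hsmul (q : Q) (x : X) : (show X from g q • (show Y from x)) = q • x :=
    congrArg (· • x) (RingHom.quotientKerEquivOfSurjective_symm_apply hg q)
  let e : (restrictScalars g).obj Y ≃ₗ[Q] X := { AddEquiv.refl X with map_smul' := hsmul }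
  exact ⟨Y, ⟨e.toModuleIso⟩⟩

lemma mono_whiskerRight_restrictScalars (F : ModuleCat.{u} A) [Module.Flat A F]
    {X Y : ModuleCat.{u} Q} (φ : X ⟶ Y) [Mono φ] (hX : isTorsionBy (RingHom.ker g) X)
    (hY : isTorsionBy (RingHom.ker g) Y) : Mono (φ ▷ (restrictScalars g).obj F) := by
  have := full_restrictScalars hg
  obtain ⟨X', ⟨eX⟩⟩ := exists_restrictScalars_iso hg hX
  obtain ⟨Y', ⟨eY⟩⟩ := exists_restrictScalars_iso hg hY
  obtain ⟨φ', hφ'⟩ := (restrictScalars g).map_surjective (eX.hom ≫ φ ≫ eY.inv)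
  have : Mono ((restrictScalars g).map φ') := hφ' ▸ inferInstance
  have : Mono φ' := (restrictScalars g).mono_of_mono_map this
  have : Mono (φ' ▷ F) := inferInstanceAs (Mono ((tensorRight F).map φ'))
  have := isIso_μ_restrictScalars hg X' F
  have := isIso_μ_restrictScalars hg Y' F
  have hφ : φ ▷ (restrictScalars g).obj F =
      eX.inv ▷ _ ≫ Functor.LaxMonoidal.μ (restrictScalars g) X' F ≫
        (restrictScalars g).map (φ' ▷ F) ≫ inv (Functor.LaxMonoidal.μ (restrictScalars g) Y' F) ≫
          eY.hom ▷ _ := by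
    rw [← Functor.LaxMonoidal.μ_natural_left_assoc, IsIso.hom_inv_id_assoc, hφ']
    simp only [← comp_whiskerRight, Category.assoc, Iso.inv_hom_id, Category.comp_id,
      Iso.inv_hom_id_assoc]
  rw [hφ]
  infer_instance

theorem isFlatOnTorsion_restrictScalars (K : ChainComplex (ModuleCat.{u} A) ℕ)
    [∀ i, Module.Flat A (K.X i)] :
    IsFlatOnTorsion (RingHom.ker g) (((restrictScalars g).mapHomologicalComplex _).obj K) := by
  intro S hS hT
  refine shortExact_map_tensorComplex _ fun i => ?_
  let F : ModuleCat.{u} Q := (restrictScalars g).obj (K.X i)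
  obtain ⟨hexact, hepi⟩ := (tensorRight F).preservesFiniteColimits_iff_forall_exact_map_and_epi.1
    inferInstance S hS
  have := hS.mono_f
  exact { exact := hexact
          mono_f := mono_whiskerRight_restrictScalars hg (K.X i) S.f
            (ObjectProperty.prop_of_mono _ S.f hT) hT
          epi_g := hepi }

end RestrictScalars

section ExtGradeMap

variable {R Q : Type u} [CommRing R] [CommRing Q] (G : ModuleCat.{u} R ⥤ ModuleCat.{u} Q)

/-- The functor `G` sends multiplication by any element of `I` to multiplication by some element of
`Q`, a weak form of linearity that does not require `G` to be linear over a ring map `R → Q`. -/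
def PreservesSMulBy (I : Ideal R) : Prop :=
  ∀ r ∈ I, ∃ q : Q, ∀ X : ModuleCat.{u} R, G.map (r • 𝟙 X) = q • 𝟙 (G.obj X)

variable {G} {k : ModuleCat.{u} R} [G.Additive] (hG : PreservesSMulBy G (Module.annihilator R k))
include hG

lemma extFunctorObj_map_smul_eq_zero {r : R} (hr : r ∈ Module.annihilator R k) (X : ModuleCat.{u} R)
    (n : ℕ) : (Abelian.extFunctorObj (G.obj k) n).map (G.map (r • 𝟙 X)) = 0 := by
  obtain ⟨q, hq⟩ := hG r hr
  have hk : r • 𝟙 k = 0 := by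
    ext x
    exact Module.mem_annihilator.1 hr x
  have hqk : q ∈ Module.annihilator Q (G.obj k) := Module.mem_annihilator.2 fun x => by
    have hq0 : q • 𝟙 (G.obj k) = 0 := by rw [← hq, hk, G.map_zero]
    exact congr($hq0 x)
  rw [hq]
  exact Abelian.Ext.postcomp_smul_id_eq_zero_of_mem_annihilator hqk n

variable [PreservesFiniteLimits G] [PreservesFiniteColimits G]

lemma extGrade_map_quotSMulTop_add_one {r : R} (hr : r ∈ Module.annihilator R k)
    {X : ModuleCat.{u} R} (hX : IsSMulRegular X r) :
    extGrade (G.obj k) (G.obj (.of R (QuotSMulTop r X))) + 1 = extGrade (G.obj k) (G.obj X) :=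
  extGrade_X₃_add_one_eq (S := (X.smulShortComplex r).map G)
    (hX.smulShortComplex_shortExact.map_of_exact G) le_rfl
    (extFunctorObj_map_smul_eq_zero hG hr X)

theorem natCast_le_extGrade_map_iff [G.Faithful] [IsNoetherianRing R] [Module.Finite R k] (n : ℕ)
    (X : ModuleCat.{u} R) [Module.Finite R X] :
    n ≤ extGrade (G.obj k) (G.obj X) ↔
      ∃ rs : List R, rs.length = n ∧ (∀ r ∈ rs, r ∈ Module.annihilator R k) ∧
        IsWeaklyRegular X rs := by
  induction n generalizing X with
  | zero => exact iff_of_true (by simp) ⟨[], rfl, by simp, .nil R X⟩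
  | succ n ih =>
    have hiff {r : R} (hr : r ∈ Module.annihilator R k) (hX : IsSMulRegular X r) :
        ((n + 1 : ℕ) : ℕ∞) ≤ extGrade (G.obj k) (G.obj X) ↔
          n ≤ extGrade (G.obj k) (G.obj (.of R (QuotSMulTop r X))) := by
      rw [← extGrade_map_quotSMulTop_add_one hG hr hX, Nat.cast_add, Nat.cast_one,
        ENat.add_le_add_iff_right ENat.one_ne_top]
    refine ⟨fun h => ?_, ?_⟩
    · have hHom : Subsingleton (k →ₗ[R] X) := subsingleton_of_forall_eq 0 fun φ => by
        by_contra hφ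
        have hG0 : G.map (ModuleCat.ofHom φ) ≠ 0 := fun h0 =>
          hφ congr(($((G.map_eq_zero_iff).1 h0)).hom)
        simp [extGrade_eq_zero_of_ne_zero hG0] at h
      obtain ⟨r, hr, hX⟩ := IsSMulRegular.subsingleton_linearMap_iff.1 hHom
      obtain ⟨rs, rfl, hrs, hreg⟩ := (ih _).1 ((hiff hr hX).1 h)
      exact ⟨r :: rs, rfl, by simpa using ⟨hr, hrs⟩, hreg.cons hX⟩
    · rintro ⟨_ | ⟨r, rs⟩, hlen, hmem, hreg⟩
      · simp at hlen
      · rw [List.forall_mem_cons] at hmem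
        rw [isWeaklyRegular_cons_iff] at hreg
        exact (hiff hmem.1 hreg.1).2 ((ih _).2 ⟨rs, by simpa using hlen, hmem.2, hreg.2⟩)

end ExtGradeMap

section Depth

open IsLocalRing

lemma rdepth_congr {A M N : Type u} [CommRing A] [AddCommGroup M] [Module A M] [AddCommGroup N]
    [Module A N] (e : M ≃ₗ[A] N) : rdepth A M = rdepth A N := by
  simp only [rdepth, e.isWeaklyRegular_congr]

lemma rdepth_eq_top {A : Type u} [CommRing A] [Nontrivial A] (X : Type u) [AddCommGroup X]
    [Module A X] [Subsingleton X] : rdepth A X = ⊤ := by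
  refine ENat.eq_top_iff_forall_ge.2 fun n => le_sSup ⟨List.replicate n 0, by simp, ?_, ?_⟩
  · simp
  · exact (isWeaklyRegular_iff X _).2 fun i hi => Function.injective_of_subsingleton _

variable {R : Type u} [CommRing R] [IsNoetherianRing R] [IsLocalRing R]

lemma rdepth_eq_extGrade_map {Q : Type u} [CommRing Q] {G : ModuleCat.{u} R ⥤ ModuleCat.{u} Q}
    [G.Additive] [PreservesFiniteLimits G] [PreservesFiniteColimits G] [G.Faithful]
    {k : ModuleCat.{u} R} [Module.Finite R k] (hk : Module.annihilator R k = maximalIdeal R)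
    (hG : PreservesSMulBy G (maximalIdeal R)) (X : ModuleCat.{u} R) [Module.Finite R X] :
    rdepth R X = extGrade (G.obj k) (G.obj X) := by
  have hiff (n : ℕ) := natCast_le_extGrade_map_iff (hk ▸ hG) n X
  refine le_antisymm (sSup_le ?_) (ENat.forall_natCast_le_iff_le.1 fun n hn => le_sSup ?_)
  · rintro _ ⟨rs, rfl, hrs, hreg⟩
    exact (hiff _).2 ⟨rs, rfl, hk.symm ▸ hrs, hreg⟩
  · obtain ⟨rs, rfl, hrs, hreg⟩ := (hiff n).1 hn
    exact ⟨rs, rfl, by rwa [hk] at hrs, hreg⟩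

lemma rdepth_le_ringKrullDim (X : Type u) [AddCommGroup X] [Module R X] [Module.Finite R X]
    [Nontrivial X] : (rdepth R X : WithBot ℕ∞) ≤ ringKrullDim R := by
  obtain ⟨n, hn⟩ : ∃ n : ℕ∞, (n : WithBot ℕ∞) = ringKrullDim R :=
    WithBot.ne_bot_iff_exists.1 ringKrullDim_ne_bot
  rw [← hn, WithBot.coe_le_coe]
  refine sSup_le ?_
  rintro _ ⟨rs, rfl, hrs, hreg⟩
  have hreg : IsRegular X rs :=
    (isRegular_iff_isWeaklyRegular_of_subset_maximalIdeal hrs).2 hreg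
  have hquot : Nontrivial (X ⧸ Ideal.ofList rs • (⊤ : Submodule R X)) :=
    Submodule.Quotient.nontrivial_iff.2 hreg.2.symm
  have : Nonempty (Module.support R (X ⧸ Ideal.ofList rs • (⊤ : Submodule R X))) :=
    Module.nonempty_support_of_nontrivial.to_subtype
  rw [← WithBot.coe_le_coe, hn]
  calc (rs.length : WithBot ℕ∞)
      ≤ Module.supportDim R (X ⧸ Ideal.ofList rs • (⊤ : Submodule R X)) + rs.length :=
        le_add_of_nonneg_left Order.krullDim_nonneg
    _ = Module.supportDim R X := Module.supportDim_add_length_eq_supportDim_of_isRegular rs hreg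
    _ ≤ ringKrullDim R := Module.supportDim_le_ringKrullDim R X

lemma rdepth_ne_top (X : Type u) [AddCommGroup X] [Module R X] [Module.Finite R X]
    [Nontrivial X] : rdepth R X ≠ ⊤ := by
  intro h
  have := rdepth_le_ringKrullDim (R := R) X
  rw [h] at this
  exact ringKrullDim_ne_top (top_le_iff.1 this)

end Depth

section ChangeOfRings

open MonoidalCategory ModuleCat

lemma exists_surjective_ker_eq {Q A : Type u} [CommRing Q] [CommRing A] {I : Ideal Q}
    (e : (Q ⧸ I) ≃+* A) : ∃ g : Q →+* A, Function.Surjective g ∧ RingHom.ker g = I :=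
  ⟨e.toRingHom.comp (Ideal.Quotient.mk I), e.surjective.comp Ideal.Quotient.mk_surjective,
    (RingHom.ker_equiv_comp _ e).trans Ideal.mk_ker⟩

variable {R A Q : Type u} [CommRing R] [CommRing A] [CommRing Q] (f : R →+* A) (g : Q →+* A)

/-- The functor `X ↦ A ⊗[R] X`, viewed over `Q` through `g : Q → A`. -/
abbrev extendRestrictScalars : ModuleCat.{u} R ⥤ ModuleCat.{u} Q :=
  extendScalars.{u, u, u} f ⋙ restrictScalars.{u} g

instance : (extendScalars.{u, u, u} f).Additive :=
  (extendRestrictScalarsAdj f).left_adjoint_additive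

lemma extendScalars_map_smul_id (r : R) (X : ModuleCat.{u} R) :
    (extendScalars.{u, u, u} f).map (r • 𝟙 X) = f r • 𝟙 ((extendScalars.{u, u, u} f).obj X) := by
  algebraize [f]
  ext x
  change (1 : A) ⊗ₜ[R] (r • x) = f r • ((1 : A) ⊗ₜ[R] x)
  rw [TensorProduct.tmul_smul]
  exact (algebraMap_smul A r _).symm

variable {f g}

lemma preservesSMulBy_extendRestrictScalars (hg : Function.Surjective g) (I : Ideal R) :
    PreservesSMulBy (extendRestrictScalars f g) I := fun r _ => by
  obtain ⟨q, hq⟩ := hg (f r)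
  refine ⟨q, fun X => ?_⟩
  rw [Functor.comp_map, extendScalars_map_smul_id, ← hq]
  rfl

lemma isIso_μ_extendRestrictScalars (hg : Function.Surjective g) (X Y : ModuleCat.{u} R) :
    IsIso (Functor.LaxMonoidal.μ (extendRestrictScalars f g) X Y) := by
  have := isIso_μ_restrictScalars hg ((extendScalars f).obj X) ((extendScalars f).obj Y)
  rw [Functor.LaxMonoidal.comp_μ]
  infer_instance

lemma exists_extendRestrictScalars_unit_iso (hg : Function.Surjective g) {rs : List Q}
    (hrs : RingHom.ker g = Ideal.ofList rs) :
    Nonempty ((extendRestrictScalars f g).obj (𝟙_ (ModuleCat.{u} R)) ≅ quotientModule rs) := by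
  algebraize [g]
  have hker : Ideal.ofList rs • ⊤ = LinearMap.ker (Algebra.linearMap Q A) :=
    (Ideal.mul_top _).trans hrs.symm
  let e : (Q ⧸ (Ideal.ofList rs • ⊤ : Submodule Q Q)) ≃ₗ[Q] A :=
    (Submodule.quotEquivOfEq _ _ hker).trans
      ((Algebra.linearMap Q A).quotKerEquivOfSurjective hg)
  exact ⟨(restrictScalars g).mapIso (Functor.Monoidal.εIso (extendScalars f)).symm ≪≫
    e.toModuleIso.symm⟩

lemma isFlatOnTorsion_extendRestrictScalars (hg : Function.Surjective g)
    (K : ChainComplex (ModuleCat.{u} R) ℕ) [∀ i, Module.Flat R (K.X i)] :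
    IsFlatOnTorsion (RingHom.ker g)
      (((extendRestrictScalars f g).mapHomologicalComplex _).obj K) := by
  have (i : ℕ) : Module.Flat A ((((extendScalars f).mapHomologicalComplex _).obj K).X i) := by
    algebraize [f]
    exact inferInstanceAs (Module.Flat A (TensorProduct R A (K.X i)))
  exact isFlatOnTorsion_restrictScalars hg (((extendScalars f).mapHomologicalComplex _).obj K)

lemma finite_restrictScalars (hg : Function.Surjective g) (Y : ModuleCat.{u} A)
    [Module.Finite A Y] : Module.Finite Q ((restrictScalars.{u} g).obj Y) := by
  algebraize [g]
  have : Module.Finite Q A := .of_surjective (Algebra.linearMap Q A) hg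
  have : IsScalarTower Q A ((restrictScalars.{u} g).obj Y) :=
    ⟨fun q a y => mul_smul (g q) a (show Y from y)⟩
  have : Module.Finite A ((restrictScalars.{u} g).obj Y) := ‹Module.Finite A Y›
  exact Module.Finite.trans A _

lemma finite_extendRestrictScalars (hg : Function.Surjective g) (X : ModuleCat.{u} R)
    [Module.Finite R X] : Module.Finite Q ((extendRestrictScalars f g).obj X) := by
  algebraize [f]
  have : Module.Finite A ((extendScalars f).obj X) :=
    inferInstanceAs (Module.Finite A (TensorProduct R A X))
  exact finite_restrictScalars hg _

lemma nontrivial_extendRestrictScalars (hf : f.FaithfullyFlat) (X : ModuleCat.{u} R)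
    [Nontrivial X] : Nontrivial ((extendRestrictScalars f g).obj X) := by
  algebraize [f]
  exact (Module.FaithfullyFlat.tensorProduct_mk_injective (A := R) (B := A) X).nontrivial

lemma faithful_extendScalars (hf : f.FaithfullyFlat) :
    (extendScalars.{u, u, u} f).Faithful := by
  algebraize [f]
  have (X : ModuleCat.{u} R) : Mono ((extendRestrictScalarsAdj f).unit.app X) :=
    (ModuleCat.mono_iff_injective _).2 (Module.FaithfullyFlat.tensorProduct_mk_injective (B := A) X)
  exact (extendRestrictScalarsAdj f).faithful_L_of_mono_unit_app

lemma le_annihilator_extendRestrictScalars {I : Ideal Q} {J : Ideal R} (hIJ : I.map g ≤ J.map f)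
    {X : ModuleCat.{u} R} (hX : J ≤ Module.annihilator R X) :
    I ≤ Module.annihilator Q ((extendRestrictScalars f g).obj X) := by
  algebraize [f]
  have hJ : J.map f ≤ Module.annihilator A (TensorProduct R A X) := by
    refine Ideal.map_le_iff_le_comap.2 fun r hr => Module.mem_annihilator.2 fun x => ?_
    induction x with
    | zero => exact smul_zero _
    | add x y hx hy => rw [smul_add, hx, hy, add_zero]
    | tmul a x =>
      refine (algebraMap_smul A r (a ⊗ₜ[R] x)).trans ?_
      rw [← TensorProduct.tmul_smul, Module.mem_annihilator.1 (hX hr), TensorProduct.tmul_zero]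
  exact fun q hq => Module.mem_annihilator.2
    (Module.mem_annihilator.1 (hJ (hIJ (Ideal.mem_map_of_mem g hq))))

lemma rdepth_eq_extGrade_extendRestrictScalars [IsLocalRing R] [IsNoetherianRing R]
    (hf : f.FaithfullyFlat) (hg : Function.Surjective g) (X : ModuleCat.{u} R)
    [Module.Finite R X] :
    rdepth R X = extGrade ((extendRestrictScalars f g).obj (.of R (R ⧸ IsLocalRing.maximalIdeal R)))
      ((extendRestrictScalars f g).obj X) := by
  have := preservesFiniteLimits_extendScalars_of_flat hf.flat
  have := faithful_extendScalars hf
  exact rdepth_eq_extGrade_map Ideal.annihilator_quotient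
    (preservesSMulBy_extendRestrictScalars hg _) X

end ChangeOfRings

section TorIndependence

open MonoidalCategory

variable {R : Type u} [CommRing R]

lemma isHigherAcyclic_of_subsingleton_torM {M N : Type u} [AddCommGroup M] [Module R M]
    [AddCommGroup N] [Module R N] (h : ∀ i ≥ 1, Subsingleton (TorM R i M N))
    (P : ProjectiveResolution (ModuleCat.of R N)) :
    IsHigherAcyclic (tensorComplex P.complex) (.of R M) := fun i =>
  have : Subsingleton (TorModCat R (i + 1) M N) := h (i + 1) (by lia)
  (HomologicalComplex.exactAt_iff_isZero_homology _ _).2 <|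
    (ModuleCat.isZero_of_subsingleton (TorModCat R (i + 1) M N)).of_iso
      (P.isoLeftDerivedObj (tensorLeft (ModuleCat.of R M)) (i + 1)).symm

lemma isHigherAcyclic_of_projective (M X : ModuleCat.{u} R) [Projective X] :
    IsHigherAcyclic (tensorComplex (ProjectiveResolution.self X).complex) M := fun i =>
  HomologicalComplex.ExactAt.of_isZero <|
    (tensorLeft M).map_isZero (HomologicalComplex.isZero_single_obj_X _ _ _ _ (by simp))

end TorIndependence

section DepthFormula

open IsLocalRing ModuleCat MonoidalCategory TensorProduct

lemma nontrivial_tensorProduct (R M N : Type u) [CommRing R] [IsLocalRing R] [AddCommGroup M]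
    [Module R M] [Module.Finite R M] [Nontrivial M] [AddCommGroup N] [Module R N]
    [Module.Finite R N] [Nontrivial N] : Nontrivial (M ⊗[R] N) := by
  have hiff (X : Type u) [AddCommGroup X] [Module R X] [Module.Finite R X] :
      Nontrivial (ResidueField R ⊗[R] X) ↔ Nontrivial X := by
    simp only [← not_subsingleton_iff_nontrivial, IsLocalRing.subsingleton_tensorProduct]
  have hM := (hiff M).2 inferInstance
  have hN := (hiff N).2 inferInstance
  exact (hiff _).1
    (AlgebraTensorModule.distribBaseChange R (ResidueField R) M N).toEquiv.nontrivial

variable {Q : Type u} [CommRing Q] [IsLocalRing Q] [IsNoetherianRing Q] {ss : List Q}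
  (hss : IsWeaklyRegular Q ss) (hm : Ideal.ofList ss = maximalIdeal Q)

include hss hm in
lemma exists_finite_minimal_resolution (M : ModuleCat.{u} Q) [Module.Finite Q M] [Nontrivial M] :
    ∃ P : ProjectiveResolution M, (∀ i, Module.Free Q (P.complex.X i)) ∧
      (∀ i, Module.Finite Q (P.complex.X i)) ∧
      (∀ i j, LinearMap.range (P.complex.d i j).hom ≤
        maximalIdeal Q • (⊤ : Submodule Q (P.complex.X j))) ∧
      ∃ p, Nontrivial (P.complex.X p) ∧ ∀ i > p, IsZero (P.complex.X i) := by
  obtain ⟨P, hfree, hfin, hd⟩ := exists_minimal_resolution M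
  have : Nontrivial (quotientModule ss) := by
    rw [quotientModule, hm]
    exact Submodule.Quotient.nontrivial_iff.2
      ((Ideal.mul_top _).trans_ne (Ideal.IsPrime.ne_top inferInstance))
  exact ⟨P, hfree, hfin, hd, exists_last_nontrivial_term hss P (hm ▸ hd)⟩

variable {R A : Type u} [CommRing R] [IsLocalRing R] [IsNoetherianRing R] [CommRing A] {f : R →+* A}
  {g : Q →+* A} (hf : f.FaithfullyFlat) (hg : Function.Surjective g) {rs : List Q}
  (hrs : IsWeaklyRegular Q rs) (hker : RingHom.ker g = Ideal.ofList rs)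
  (hfg : (maximalIdeal Q).map g ≤ (maximalIdeal R).map f)

include hss hm hf hg hrs hker hfg

theorem exists_rdepth_add_length_eq
    (M : ModuleCat.{u} R) [Module.Finite R M] [Nontrivial M] :
    ∃ p : ℕ, ∀ (N : ModuleCat.{u} R) [Module.Finite R N] (P : ProjectiveResolution N),
      IsHigherAcyclic (tensorComplex P.complex) M →
        rdepth R N + rs.length = p + rdepth R (M ⊗ N : ModuleCat.{u} R) := by
  let G := extendRestrictScalars f g
  have := preservesFiniteLimits_extendScalars_of_flat hf.flat
  have : Module.Finite Q (G.obj M) := finite_extendRestrictScalars hg M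
  have : Nontrivial (G.obj M) := nontrivial_extendRestrictScalars hf M
  have := isIso_μ_extendRestrictScalars (f := f) hg
  obtain ⟨e⟩ := exists_extendRestrictScalars_unit_iso (f := f) hg hker
  obtain ⟨P', hfree, hfin, hd, p, hp, hp'⟩ := exists_finite_minimal_resolution hss hm (G.obj M)
  refine ⟨p, fun N _ P h => ?_⟩
  have : Module.Finite R (M ⊗ N : ModuleCat.{u} R) :=
    inferInstanceAs (Module.Finite R (TensorProduct R M N))
  cases subsingleton_or_nontrivial N with
  | inl hN =>
    have : Subsingleton (M ⊗ N : ModuleCat.{u} R) :=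
      inferInstanceAs (Subsingleton (TensorProduct R M N))
    rw [rdepth_eq_top, rdepth_eq_top, top_add, add_top]
  | inr hN =>
    have : Nontrivial (M ⊗ N : ModuleCat.{u} R) := nontrivial_tensorProduct R M N
    obtain ⟨d, hd'⟩ := ENat.ne_top_iff_exists.1 (rdepth_ne_top (R := R) N)
    obtain ⟨t, ht⟩ := ENat.ne_top_iff_exists.1 (rdepth_ne_top (R := R) (M ⊗ N : ModuleCat.{u} R))
    have hcount := extGrade_add_length_eq_of_isHigherAcyclic G e hrs
      (fun K _ => hker ▸ isFlatOnTorsion_extendRestrictScalars hg K) P h P' hfree hfin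
      (le_annihilator_extendRestrictScalars hfg Ideal.annihilator_quotient.ge) hd hp hp'
      ((rdepth_eq_extGrade_extendRestrictScalars hf hg N).symm.trans hd'.symm)
      ((rdepth_eq_extGrade_extendRestrictScalars hf hg (M ⊗ N)).symm.trans ht.symm)
    rw [← hd', ← ht]
    exact_mod_cast hcount

theorem rdepth_add_rdepth_eq (M N : ModuleCat.{u} R) [Module.Finite R M] [Module.Finite R N]
    (P : ProjectiveResolution N) (h : IsHigherAcyclic (tensorComplex P.complex) M) :
    rdepth R M + rdepth R N = rdepth R R + rdepth R (M ⊗ N : ModuleCat.{u} R) := by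
  cases subsingleton_or_nontrivial M with
  | inl hM =>
    have : Subsingleton (M ⊗ N : ModuleCat.{u} R) :=
      inferInstanceAs (Subsingleton (TensorProduct R M N))
    rw [rdepth_eq_top (X := M), rdepth_eq_top (X := (M ⊗ N : ModuleCat.{u} R)), top_add, add_top]
  | inr hM =>
    obtain ⟨p, hp⟩ := exists_rdepth_add_length_eq hss hm hf hg hrs hker hfg M
    have hN := hp N P h
    have hR : rdepth R R + rs.length = p + rdepth R M := by
      rw [rdepth_congr (ρ_ M).symm.toLinearEquiv]
      exact hp (𝟙_ (ModuleCat.{u} R)) _ (isHigherAcyclic_of_projective M _)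
    refine ENat.add_right_injective_of_ne_top (ENat.natCast_ne_top p) ?_
    calc p + (rdepth R M + rdepth R N)
        = rdepth R R + (rdepth R N + rs.length) := by rw [← add_assoc, ← hR]; ring
      _ = p + (rdepth R R + rdepth R (M ⊗ N : ModuleCat.{u} R)) := by rw [hN]; ring

end DepthFormula

/-- the depth formula over complete intersections for Tor-independent
modules. -/
theorem stmt13 (R : Type u) [CommRing R] (hR : IsCIRing R)
    (M N : Type u) [AddCommGroup M] [Module R M] [Module.Finite R M]
    [AddCommGroup N] [Module R N] [Module.Finite R N]
    (hv : ∀ i ≥ 1, Subsingleton (TorM R i M N)) :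
    rdepth R M + rdepth R N = rdepth R R + rdepth R (TensorProduct R M N) := by
  obtain ⟨_, _, Q, _, ⟨_, _, ss, hss, -, hm⟩, rs, -, hrs, ⟨e⟩⟩ := hR
  have hmR : Ideal.span (nonunits R) = IsLocalRing.maximalIdeal R :=
    Ideal.span_eq (IsLocalRing.maximalIdeal R)
  have hmQ : Ideal.span (nonunits Q) = IsLocalRing.maximalIdeal Q :=
    Ideal.span_eq (IsLocalRing.maximalIdeal Q)
  rw [hmR] at e
  obtain ⟨g, hg, hker⟩ := exists_surjective_ker_eq e
  have hfg := ((IsLocalRing.map_maximalIdeal_of_surjective g hg).trans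
    AdicCompletion.maximalIdeal_eq_map).le
  have hf : (algebraMap R (AdicCompletion (IsLocalRing.maximalIdeal R) R)).FaithfullyFlat :=
    RingHom.faithfullyFlat_algebraMap_iff.2 .of_flat_of_isLocalHom
  exact rdepth_add_rdepth_eq hss (hm.trans hmQ) hf hg hrs hker hfg (.of R M) (.of R N)
    (projectiveResolution (ModuleCat.of R N)) (isHigherAcyclic_of_subsingleton_torM hv _)

end
end

section
/- Let R be a Gorenstein local ring and M a finitely generated R-module satisfying Serre's condition (S_2). Then M is reflexive. -/
open RingTheory.Sequence CategoryTheory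

universe u

noncomputable section

/-!
The biduality map `M → M**` is an isomorphism as soon as no prime `p` is associated to its kernel or
cokernel, and since biduality commutes with localization this can be tested over `R_p`.

If `p` has height at most one, `R_p` is Gorenstein of dimension at most one, so `Ext²(-, R_p) = 0`.
Dualizing a presentation then shows that biduality is surjective for every finitely generated
module, and that it is bijective as soon as `Ext¹(M_p, R_p) = 0`; the latter follows by Nakayama
from the depth condition on `M_p`. If `p` has height at least two, `M_p` has depth at least two and
`M_p**` has depth at least one, which prevents `p` from being associated to the kernel or the
cokernel.
-/

open Abelian IsLocalRing
open scoped Pointwise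

section Ext

universe w v

variable {C : Type v} [Category C] [Abelian C] [HasExt.{w} C] {S : ShortComplex C} {Y : C}
  {n : ℕ}

lemma subsingleton_ext_X₁ (hS : S.ShortExact) (h₂ : Subsingleton (Ext S.X₂ Y n))
    (h₃ : Subsingleton (Ext S.X₃ Y (n + 1))) : Subsingleton (Ext S.X₁ Y n) := by
  refine subsingleton_of_forall_eq 0 fun x => ?_
  obtain ⟨y, rfl⟩ := Ext.contravariant_sequence_exact₁ hS Y x (add_comm 1 n) (h₃.elim _ _)
  rw [h₂.elim y 0, Ext.comp_zero]

lemma subsingleton_ext_X₂ (hS : S.ShortExact) (h₁ : Subsingleton (Ext S.X₁ Y n))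
    (h₃ : Subsingleton (Ext S.X₃ Y n)) : Subsingleton (Ext S.X₂ Y n) := by
  refine subsingleton_of_forall_eq 0 fun x => ?_
  obtain ⟨y, rfl⟩ := Ext.contravariant_sequence_exact₂ hS Y x (h₁.elim _ _)
  rw [h₃.elim y 0, Ext.comp_zero]

lemma subsingleton_ext_congr {X X' : C} (e : X ≅ X') :
    Subsingleton (Ext X Y n) ↔ Subsingleton (Ext X' Y n) :=
  ((((extFunctor n).mapIso e.op).app Y).addCommGroupIsoToAddEquiv).toEquiv.subsingleton_congr.symm

end Ext

section ModuleExt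

variable {A : Type u} [CommRing A]

lemma shortExact_mkQ_range {N L : Type u} [AddCommGroup N] [Module A N] [AddCommGroup L]
    [Module A L] {f : N →ₗ[A] L} (hf : Function.Injective f) :
    (ModuleCat.shortComplexOfCompEqZero f f.range.mkQ f.range_mkQ_comp).ShortExact :=
  ModuleCat.shortComplex_shortExact _ (LinearMap.exact_map_mkQ_range f) hf f.range.mkQ_surjective

lemma exists_extension_of_subsingleton_ext_one {N₁ N₂ N₃ L : Type u}
    [AddCommGroup N₁] [Module A N₁] [AddCommGroup N₂] [Module A N₂] [AddCommGroup N₃] [Module A N₃]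
    [AddCommGroup L] [Module A L] {f : N₁ →ₗ[A] N₂} {g : N₂ →ₗ[A] N₃} (hfg : Function.Exact f g)
    (hf : Function.Injective f) (hg : Function.Surjective g)
    (h₃ : Subsingleton (Ext (ModuleCat.of A N₃) (ModuleCat.of A L) 1)) (φ : N₁ →ₗ[A] L) :
    ∃ ψ : N₂ →ₗ[A] L, ψ ∘ₗ f = φ := by
  obtain ⟨y, hy⟩ := Ext.contravariant_sequence_exact₁
    (ModuleCat.shortComplex_shortExact (ModuleCat.shortComplexOfCompEqZero f g
      hfg.linearMap_comp_eq_zero) hfg hf hg) (ModuleCat.of A L)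
    (Ext.homEquiv₀.symm (ModuleCat.ofHom φ)) (add_comm 1 0) (h₃.elim _ _)
  obtain ⟨ψ, rfl⟩ := Ext.homEquiv₀.symm.surjective y
  simp only [Ext.homEquiv₀_symm_apply, Ext.mk₀_comp_mk₀] at hy
  exact ⟨ψ.hom, congrArg ModuleCat.Hom.hom (Ext.homEquiv₀.symm.injective hy)⟩

lemma subsingleton_ext_zero_iff {N L : Type u} [AddCommGroup N] [Module A N] [AddCommGroup L]
    [Module A L] :
    Subsingleton (Ext (ModuleCat.of A N) (ModuleCat.of A L) 0) ↔ Subsingleton (N →ₗ[A] L) :=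
  ((Ext.linearEquiv₀ (R := A)).trans (ModuleCat.homLinearEquiv (M := ModuleCat.of A N)
    (N := ModuleCat.of A L) (S := A))).toEquiv.subsingleton_congr

lemma hasInjectiveDimensionLT_of_forall_quotient_ideal (n : ℕ) : ∀ (Y : ModuleCat.{u} A),
    (∀ I : Ideal A, Subsingleton (Ext (ModuleCat.of A (A ⧸ I)) Y n)) →
      HasInjectiveDimensionLT Y n := by
  induction n with
  | zero =>
    intro Y h
    rw [hasInjectiveDimensionLT_zero_iff_isZero]
    have := subsingleton_ext_zero_iff.mp
      ((subsingleton_ext_congr (Submodule.quotEquivOfEqBot ⊥ rfl).toModuleIso).mp (h ⊥))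
    have : Subsingleton Y := (LinearMap.ringLmapEquivSelf A A Y).symm.subsingleton
    exact ModuleCat.isZero_of_subsingleton Y
  | succ n ih =>
    intro Y h
    obtain _ | n := n
    · have hBaer : Module.Baer A Y := fun I φ => by
        obtain ⟨ψ, hψ⟩ := exists_extension_of_subsingleton_ext_one (f := I.subtype) (g := I.mkQ)
          (LinearMap.exact_subtype_mkQ I) I.injective_subtype I.mkQ_surjective (h I) φ
        exact ⟨ψ, fun x hx => LinearMap.congr_fun hψ ⟨x, hx⟩⟩
      exact injective_iff_hasInjectiveDimensionLT_one.mp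
        ((Module.injective_iff_injective_object A Y).mp hBaer.injective)
    · let S := ShortComplex.mk (Injective.ι Y) (Limits.cokernel.π (Injective.ι Y)) (by simp)
      have hS : S.ShortExact := { exact := ShortComplex.exact_cokernel _ }
      have hX₂ : Injective S.X₂ := inferInstanceAs (Injective (Injective.under Y))
      refine (hS.hasInjectiveDimensionLT_X₃_iff n hX₂).mp
        (ih _ fun I => subsingleton_of_forall_eq 0 fun x => ?_)
      obtain ⟨y, rfl⟩ := Ext.covariant_sequence_exact₃ _ hS x rfl ((h I).elim _ _)
      rw [Ext.eq_zero_of_injective y, Ext.zero_comp]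

end ModuleExt

section LocalAlgebra

variable {A : Type u} [CommRing A]

lemma isSMulRegular_quotient_of_notMem_prime {p : Ideal A} [p.IsPrime] {x : A} (hx : x ∉ p) :
    IsSMulRegular (A ⧸ p) x :=
  (isSMulRegular_quotient_iff_mem_of_smul_mem p x).mpr fun _ hy =>
    (Ideal.IsPrime.mem_or_mem ‹_› hy).resolve_left hx

variable [IsNoetherianRing A]

lemma minimalPrimes_subset_associatedPrimes_self : minimalPrimes A ⊆ associatedPrimes A A := by
  have h := Module.associatedPrimes.minimalPrimes_annihilator_subset_associatedPrimes A A
  rwa [Module.annihilator_eq_bot.mpr inferInstance] at h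

variable [IsLocalRing A]

lemma exists_isSMulRegular_mem_maximalIdeal_iff {N : Type*} [AddCommGroup N] [Module A N]
    [Module.Finite A N] :
    (∃ x ∈ maximalIdeal A, IsSMulRegular N x) ↔ maximalIdeal A ∉ associatedPrimes A N := by
  have hom_zero_iff := IsSMulRegular.subsingleton_linearMap_iff (R := A) (M := N)
    (N := A ⧸ maximalIdeal A)
  rw [Ideal.annihilator_quotient] at hom_zero_iff
  rw [← hom_zero_iff, AssociatedPrimes.mem_iff, isAssociatedPrime_iff_exists_injective_linearMap]
  have : IsSimpleModule A (A ⧸ maximalIdeal A) :=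
    isSimpleModule_iff_isCoatom.mpr (maximalIdeal.isMaximal A).out
  constructor
  · rintro hom_zero ⟨-, f, hf⟩
    exact one_ne_zero (hf (by rw [hom_zero.elim f 0]; rfl) : (1 : A ⧸ maximalIdeal A) = 0)
  · exact fun h => subsingleton_of_forall_eq 0 fun f =>
      f.injective_or_eq_zero.resolve_left fun hf => h ⟨inferInstance, f, hf⟩

-- Nakayama: multiplication by `x` is onto `Ext N Y n`.
lemma subsingleton_ext_of_quotSMulTop {N : Type u} [AddCommGroup N] [Module A N] [Module.Finite A N]
    {Y : ModuleCat.{u} A} [Module.Finite A Y] {x : A} (hx : x ∈ maximalIdeal A)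
    (hreg : IsSMulRegular N x) {n : ℕ}
    (h : Subsingleton (Ext (ModuleCat.of A (QuotSMulTop x N)) Y (n + 1))) :
    Subsingleton (Ext (ModuleCat.of A N) Y n) := by
  have hS := IsSMulRegular.smulShortComplex_shortExact (M := ModuleCat.of A N) hreg
  let E := Ext (ModuleCat.of A N) Y n
  have smul_surjective (e : E) : ∃ e' : E, x • e' = e := by
    obtain ⟨(e' : E), he'⟩ := Ext.contravariant_sequence_exact₁ hS Y e (add_comm 1 n) (h.elim _ _)
    refine ⟨e', ?_⟩
    rw [← he', ModuleCat.smulShortComplex_f_eq_smul_id]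
    calc x • e' = x • (Ext.mk₀ (𝟙 (ModuleCat.of A N))).comp e' (zero_add n) := by
          rw [Ext.mk₀_id_comp]
      _ = (Ext.mk₀ (x • 𝟙 (ModuleCat.of A N))).comp e' (zero_add n) := by
          rw [Ext.mk₀_smul, Ext.smul_comp]
  have top_le : (⊤ : Submodule A E) ≤ maximalIdeal A • ⊤ := fun e _ => by
    obtain ⟨e', rfl⟩ := smul_surjective e
    exact Submodule.smul_mem_smul hx trivial
  have top_eq_bot : (⊤ : Submodule A E) = ⊥ :=
    Submodule.eq_bot_of_le_smul_of_le_jacobson_bot _ _ Module.Finite.fg_top top_le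
      (maximalIdeal_le_jacobson ⊥)
  exact (Submodule.subsingleton_iff A).mp (subsingleton_of_bot_eq_top top_eq_bot.symm)

lemma hasInjectiveDimensionLT_of_residueField {Y : ModuleCat.{u} A} [Module.Finite A Y] {n : ℕ}
    (hY : HasInjectiveDimensionLT Y (n + 1))
    (hk : Subsingleton (Ext (ModuleCat.of A (A ⧸ maximalIdeal A)) Y n)) :
    HasInjectiveDimensionLT Y n := by
  refine hasInjectiveDimensionLT_of_forall_quotient_ideal n Y fun I => ?_
  refine IsNoetherianRing.induction_on_isQuotientEquivQuotientPrime A (M := A ⧸ I) inferInstance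
    (motive := fun N _ _ _ => Subsingleton (Ext (ModuleCat.of A N) Y n)) ?_ ?_ ?_
  · intro N _ _ _ _
    have hN := (ModuleCat.isZero_of_subsingleton (ModuleCat.of A N)).hasProjectiveDimensionLT_zero
    exact hN.subsingleton _ 0 n n.zero_le Y
  · intro N _ _ _ p e
    refine (subsingleton_ext_congr e.toModuleIso).mpr ?_
    by_cases hp : p.asIdeal = maximalIdeal A
    · exact hp ▸ hk
    · obtain ⟨x, hx, hxp⟩ := SetLike.exists_of_lt
        (lt_of_le_of_ne (le_maximalIdeal p.2.ne_top) hp)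
      exact subsingleton_ext_of_quotSMulTop hx (isSMulRegular_quotient_of_notMem_prime hxp)
        (hY.subsingleton Y (n + 1) (n + 1) le_rfl _)
  · intro N₁ _ _ _ N₂ _ _ _ N₃ _ _ _ f g hf hg h i₁ i₃
    exact subsingleton_ext_X₂ (ModuleCat.shortComplex_shortExact
      (ModuleCat.shortComplexOfCompEqZero f g h.linearMap_comp_eq_zero) h hf hg) i₁ i₃

lemma hasInjectiveDimensionLT_of_hasProjectiveDimensionLT {Y : ModuleCat.{u} A} [Module.Finite A Y]
    {D : ModuleCat.{u} A} {d n : ℕ} (hD : maximalIdeal A ∈ associatedPrimes A D)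
    (hDd : HasProjectiveDimensionLT D d) (hY : HasInjectiveDimensionLT Y n) :
    HasInjectiveDimensionLT Y d := by
  obtain ⟨-, f, hf⟩ := (isAssociatedPrime_iff_exists_injective_linearMap _ _).mp hD
  induction n with
  | zero => exact hasInjectiveDimensionLT_of_ge Y 0 d d.zero_le
  | succ n ih =>
    obtain hdn | hnd := le_or_gt d n
    · exact ih (hasInjectiveDimensionLT_of_residueField hY (subsingleton_ext_X₁
        (shortExact_mkQ_range hf) (hDd.subsingleton D d n hdn _)
        (hY.subsingleton Y (n + 1) (n + 1) le_rfl _)))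
    · exact hasInjectiveDimensionLT_of_ge Y (n + 1) d hnd

lemma hasInjectiveDimensionLT_one_of_maximalIdeal_mem_associatedPrimes {Y : ModuleCat.{u} A}
    [Module.Finite A Y] {n : ℕ} (hY : HasInjectiveDimensionLT Y n)
    (h : maximalIdeal A ∈ associatedPrimes A A) : HasInjectiveDimensionLT Y 1 :=
  hasInjectiveDimensionLT_of_hasProjectiveDimensionLT (D := ModuleCat.of A A) h inferInstance hY

lemma eq_maximalIdeal_of_mem_associatedPrimes_of_hasInjectiveDimensionLT_one {L : Type u}
    [AddCommGroup L] [Module A L] [Module.Finite A L]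
    (hL : HasInjectiveDimensionLT (ModuleCat.of A L) 1) {p : Ideal A}
    (hp : p ∈ associatedPrimes A L) : p = maximalIdeal A := by
  have hp' := hp.isPrime
  by_contra hne
  obtain ⟨x, hx, hxp⟩ := SetLike.exists_of_lt (lt_of_le_of_ne (le_maximalIdeal hp'.ne_top) hne)
  have hom_zero : Subsingleton ((A ⧸ p) →ₗ[A] L) := subsingleton_ext_zero_iff.mp
    (subsingleton_ext_of_quotSMulTop hx (isSMulRegular_quotient_of_notMem_prime hxp)
      (hL.subsingleton _ 1 1 le_rfl _))
  obtain ⟨-, f, hf⟩ := (isAssociatedPrime_iff_exists_injective_linearMap _ _).mp hp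
  exact one_ne_zero (hf (by rw [hom_zero.elim f 0]; rfl) : (1 : A ⧸ p) = 0)

lemma krullDimLE_zero_of_maximalIdeal_mem_associatedPrimes {n : ℕ}
    (hA : HasInjectiveDimensionLT (ModuleCat.of A A) n)
    (h : maximalIdeal A ∈ associatedPrimes A A) : Ring.KrullDimLE 0 A := by
  refine Ring.krullDimLE_zero_iff_forall_minimalPrimes_isMaximal.mpr fun p hp => ?_
  rw [eq_maximalIdeal_of_mem_associatedPrimes_of_hasInjectiveDimensionLT_one
    (hasInjectiveDimensionLT_one_of_maximalIdeal_mem_associatedPrimes hA h)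
    (minimalPrimes_subset_associatedPrimes_self hp)]
  infer_instance

lemma maximalIdeal_mem_associatedPrimes_quotSMulTop [Ring.KrullDimLE 1 A] {x : A}
    (hx : x ∈ maximalIdeal A) (hreg : IsSMulRegular A x) :
    maximalIdeal A ∈ associatedPrimes A (QuotSMulTop x A) := by
  have := nontrivial_quotSMulTop_of_mem_maximalIdeal A hx
  obtain ⟨p, hp⟩ := associatedPrimes.nonempty A (QuotSMulTop x A)
  have hp' := hp.isPrime
  have hxp : x ∈ p := hp.annihilator_le
    (Submodule.annihilator_top (R := A) (M := QuotSMulTop x A) ▸ QuotSMulTop.mem_annihilator A x)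
  have hp_not_minimal : p ∉ minimalPrimes A := fun hmin =>
    (biUnion_associatedPrimes_eq_compl_regular A A).le
      (Set.mem_biUnion (minimalPrimes_subset_associatedPrimes_self hmin) hxp) hreg
  exact eq_maximalIdeal ((Ring.krullDimLE_one_iff.mp ‹_› p hp').resolve_left hp_not_minimal) ▸ hp

lemma hasInjectiveDimensionLT_two_of_krullDimLE_one {n : ℕ}
    (hA : HasInjectiveDimensionLT (ModuleCat.of A A) n) [Ring.KrullDimLE 1 A] :
    HasInjectiveDimensionLT (ModuleCat.of A A) 2 := by
  by_cases h : maximalIdeal A ∈ associatedPrimes A A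
  · have := hasInjectiveDimensionLT_one_of_maximalIdeal_mem_associatedPrimes hA h
    exact hasInjectiveDimensionLT_of_ge _ 1 2 one_le_two
  · obtain ⟨x, hx, hreg⟩ := exists_isSMulRegular_mem_maximalIdeal_iff.mpr h
    have hS := IsSMulRegular.smulShortComplex_shortExact (M := ModuleCat.of A A) hreg
    have hA₁ : HasProjectiveDimensionLT (ModuleCat.of A A) 1 := inferInstance
    have hA₂ : HasProjectiveDimensionLT (ModuleCat.of A A) 2 := inferInstance
    exact hasInjectiveDimensionLT_of_hasProjectiveDimensionLT
      (maximalIdeal_mem_associatedPrimes_quotSMulTop hx hreg)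
      (hS.hasProjectiveDimensionLT_X₃ 1 hA₁ hA₂) hA

end LocalAlgebra

section Biduality

variable {A : Type u} [CommRing A]

lemma exists_injective_dual_to_pi (K : Type*) [AddCommGroup K] [Module A K] [Module.Finite A K] :
    ∃ (n : ℕ) (f : Module.Dual A K →ₗ[A] (Fin n → A)), Function.Injective f := by
  obtain ⟨n, π, hπ⟩ := Module.Finite.exists_fin' A K
  let e := (Pi.basisFun A (Fin n)).toDualEquiv.symm
  exact ⟨n, e.toLinearMap ∘ₗ π.dualMap,
    e.injective.comp (LinearMap.dualMap_injective_of_surjective hπ)⟩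

lemma subsingleton_ext_of_injective_to_projective {C F : Type u} [AddCommGroup C] [Module A C]
    [AddCommGroup F] [Module A F] [Module.Projective A F]
    {i : C →ₗ[A] F} (hi : Function.Injective i) {Y : ModuleCat.{u} A} {n : ℕ}
    (hY : HasInjectiveDimensionLT Y (n + 2)) :
    Subsingleton (Ext (ModuleCat.of A C) Y (n + 1)) := by
  have hF : HasProjectiveDimensionLT (ModuleCat.of A F) 1 := inferInstance
  exact subsingleton_ext_X₁ (shortExact_mkQ_range hi)
    (hF.subsingleton _ 1 (n + 1) (Nat.le_add_left 1 n) _)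
    (hY.subsingleton Y (n + 2) (n + 2) le_rfl _)

variable [IsNoetherianRing A]

lemma dual_eval_surjective (hA : HasInjectiveDimensionLT (ModuleCat.of A A) 2) (N : Type u)
    [AddCommGroup N] [Module A N] [Module.Finite A N] :
    Function.Surjective (Module.Dual.eval A N) := fun ζ => by
  obtain ⟨n, π, hπ⟩ := Module.Finite.exists_fin' A N
  let ι := (LinearMap.ker π).subtype
  obtain ⟨_, j, hj⟩ := exists_injective_dual_to_pi (A := A) (LinearMap.ker π)
  have exact_dual : Function.Exact π.dualMap ι.dualMap :=
    LinearMap.exact_lcomp_of_exact_of_surjective A (LinearMap.exact_subtype_ker_map π) hπ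
  have exact_range : Function.Exact π.dualMap ι.dualMap.rangeRestrict := fun φ =>
    Subtype.ext_iff.trans (exact_dual φ)
  have range_into_pi : Function.Injective (j ∘ₗ (LinearMap.range ι.dualMap).subtype) :=
    hj.comp (Submodule.injective_subtype _)
  obtain ⟨ψ, hψ⟩ := exists_extension_of_subsingleton_ext_one exact_range
    (LinearMap.dualMap_injective_of_surjective hπ) ι.dualMap.surjective_rangeRestrict
    (subsingleton_ext_of_injective_to_projective (C := LinearMap.range ι.dualMap)
      range_into_pi hA) ζ
  obtain ⟨x, rfl⟩ := (Module.bijective_dual_eval A (Fin n → A)).surjective ψ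
  exact ⟨π x, hψ⟩

lemma dual_eval_bijective_of_subsingleton_ext_one
    (hA : HasInjectiveDimensionLT (ModuleCat.of A A) 2) {N : Type u} [AddCommGroup N] [Module A N]
    [Module.Finite A N] (hN : Subsingleton (Ext (ModuleCat.of A N) (ModuleCat.of A A) 1)) :
    Function.Bijective (Module.Dual.eval A N) := by
  refine ⟨?_, dual_eval_surjective hA N⟩
  obtain ⟨n, π, hπ⟩ := Module.Finite.exists_fin' A N
  let ι := (LinearMap.ker π).subtype
  have exact_ι_π : Function.Exact ι π := LinearMap.exact_subtype_ker_map π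
  have exact_dual : Function.Exact π.dualMap ι.dualMap :=
    LinearMap.exact_lcomp_of_exact_of_surjective A exact_ι_π hπ
  have ι_dualMap_surjective : Function.Surjective ι.dualMap :=
    exists_extension_of_subsingleton_ext_one exact_ι_π Subtype.val_injective hπ hN
  have exact_bidual : Function.Exact ι.dualMap.dualMap π.dualMap.dualMap :=
    LinearMap.exact_lcomp_of_exact_of_surjective A exact_dual ι_dualMap_surjective
  exact LinearMap.injective_of_surjective_of_injective_of_right_exact ι π ι.dualMap.dualMap
    π.dualMap.dualMap (Module.Dual.eval A _) (Module.Dual.eval A _) (Module.Dual.eval A N)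
    rfl rfl exact_ι_π exact_bidual (dual_eval_surjective hA _)
    (Module.bijective_dual_eval A (Fin n → A)).injective hπ

lemma dual_eval_bijective_of_krullDimLE_one [IsLocalRing A] [Ring.KrullDimLE 1 A] {n : ℕ}
    (hA : HasInjectiveDimensionLT (ModuleCat.of A A) n) {N : Type u} [AddCommGroup N] [Module A N]
    [Module.Finite A N]
    (hN : maximalIdeal A ∈ associatedPrimes A N → maximalIdeal A ∈ associatedPrimes A A) :
    Function.Bijective (Module.Dual.eval A N) := by
  have hA₂ := hasInjectiveDimensionLT_two_of_krullDimLE_one hA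
  refine dual_eval_bijective_of_subsingleton_ext_one hA₂ ?_
  by_cases h : maximalIdeal A ∈ associatedPrimes A A
  · have hA₁ := hasInjectiveDimensionLT_one_of_maximalIdeal_mem_associatedPrimes hA h
    exact hA₁.subsingleton _ 1 1 le_rfl _
  · obtain ⟨x, hx, hreg⟩ := exists_isSMulRegular_mem_maximalIdeal_iff.mpr (mt hN h)
    exact subsingleton_ext_of_quotSMulTop hx hreg (hA₂.subsingleton _ 2 2 le_rfl _)

end Biduality

section LocalizedAssociatedPrimes

variable {R : Type*} [CommRing R] (p : Ideal R) [p.IsPrime] {M N M' N' : Type*}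
  [AddCommGroup M] [Module R M] [AddCommGroup N] [Module R N]
  [AddCommGroup M'] [Module R M'] [Module (Localization.AtPrime p) M']
  [IsScalarTower R (Localization.AtPrime p) M']
  [AddCommGroup N'] [Module R N'] [Module (Localization.AtPrime p) N']
  [IsScalarTower R (Localization.AtPrime p) N']
  (f : M →ₗ[R] M') [IsLocalizedModule p.primeCompl f]
  (g : N →ₗ[R] N') [IsLocalizedModule p.primeCompl g] {φ : M →ₗ[R] N}

include f in
lemma maximalIdeal_mem_associatedPrimes_of_isLocalizedModule (h : p ∈ associatedPrimes R M) :
    maximalIdeal (Localization.AtPrime p) ∈ associatedPrimes (Localization.AtPrime p) M' := by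
  open Module.associatedPrimes in
  refine mem_associatedPrimes_of_comap_mem_associatedPrimes_of_isLocalizedModule p.primeCompl f _ ?_
  rwa [← Ideal.under_def, Localization.AtPrime.under_maximalIdeal]

lemma maximalIdeal_mem_associatedPrimes_ker (h : p ∈ associatedPrimes R φ.ker) :
    maximalIdeal (Localization.AtPrime p) ∈ associatedPrimes (Localization.AtPrime p)
      (IsLocalizedModule.mapExtendScalars p.primeCompl f g (Localization.AtPrime p) φ).ker := by
  have ker_eq := LinearMap.localized'_ker_eq_ker_localizedMap (Localization.AtPrime p) p.primeCompl
    f g φ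
  exact ker_eq ▸ maximalIdeal_mem_associatedPrimes_of_isLocalizedModule p
    (φ.ker.toLocalized' (Localization.AtPrime p) p.primeCompl f) h

lemma maximalIdeal_mem_associatedPrimes_quotient_range
    (h : p ∈ associatedPrimes R (N ⧸ φ.range)) :
    maximalIdeal (Localization.AtPrime p) ∈ associatedPrimes (Localization.AtPrime p)
      (N' ⧸ (IsLocalizedModule.mapExtendScalars p.primeCompl f g
        (Localization.AtPrime p) φ).range) := by
  have range_eq := LinearMap.localized'_range_eq_range_localizedMap (Localization.AtPrime p)
    p.primeCompl f g φ
  exact range_eq ▸ maximalIdeal_mem_associatedPrimes_of_isLocalizedModule p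
    (φ.range.toLocalizedQuotient' (Localization.AtPrime p) p.primeCompl g) h

end LocalizedAssociatedPrimes

section LocalizedDual

variable {R : Type*} [CommRing R] (S : Submonoid R) (Rₛ : Type*) [CommRing Rₛ] [Algebra R Rₛ]
  [IsLocalization S Rₛ] {M M' : Type*} [AddCommGroup M] [Module R M] [AddCommGroup M']
  [Module R M'] [Module Rₛ M'] [IsScalarTower R Rₛ M'] (f : M →ₗ[R] M') [IsLocalizedModule S f]

/-- The localization map from the dual of `M` to the dual of its localization `M'`. It is a
localization when `M` is finitely presented. -/
abbrev localizedDual : Module.Dual R M →ₗ[R] Module.Dual Rₛ M' :=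
  IsLocalizedModule.mapExtendScalars S f (Algebra.linearMap R Rₛ) Rₛ

lemma localizedDual_apply_apply (φ : Module.Dual R M) (m : M) :
    localizedDual S Rₛ f φ (f m) = algebraMap R Rₛ (φ m) :=
  IsLocalizedModule.map_apply S f (Algebra.linearMap R Rₛ) φ m

lemma mapExtendScalars_dual_eval [IsLocalizedModule S (localizedDual S Rₛ f)]
    [IsLocalizedModule S (localizedDual S Rₛ (localizedDual S Rₛ f))] :
    IsLocalizedModule.mapExtendScalars S f (localizedDual S Rₛ (localizedDual S Rₛ f)) Rₛ
      (Module.Dual.eval R M) = Module.Dual.eval Rₛ M' := by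
  refine LinearMap.restrictScalars_injective R (IsLocalizedModule.linearMap_ext S f
    (localizedDual S Rₛ (localizedDual S Rₛ f)) (LinearMap.ext fun m => ?_))
  refine LinearMap.restrictScalars_injective R (IsLocalizedModule.linearMap_ext S
    (localizedDual S Rₛ f) (Algebra.linearMap R Rₛ) (LinearMap.ext fun φ => ?_))
  calc _ = localizedDual S Rₛ (localizedDual S Rₛ f) (Module.Dual.eval R M m)
        (localizedDual S Rₛ f φ) :=
        LinearMap.congr_fun (IsLocalizedModule.map_apply S f
          (localizedDual S Rₛ (localizedDual S Rₛ f)) (Module.Dual.eval R M) m) _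
    _ = algebraMap R Rₛ (φ m) := localizedDual_apply_apply S Rₛ _ _ φ
    _ = localizedDual S Rₛ f φ (f m) := (localizedDual_apply_apply S Rₛ f φ m).symm

end LocalizedDual

section Globalization

variable {R : Type*} [CommRing R] [IsNoetherianRing R] {M : Type*} [AddCommGroup M] [Module R M]
  [Module.Finite R M]

lemma isReflexive_of_forall_prime
    (hker : ∀ (p : Ideal R) [p.IsPrime], maximalIdeal (Localization.AtPrime p) ∉
      associatedPrimes (Localization.AtPrime p)
        (Module.Dual.eval (Localization.AtPrime p) (LocalizedModule.AtPrime p M)).ker)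
    (hcoker : ∀ (p : Ideal R) [p.IsPrime],
      Function.Injective
        (Module.Dual.eval (Localization.AtPrime p) (LocalizedModule.AtPrime p M)) →
      maximalIdeal (Localization.AtPrime p) ∉ associatedPrimes (Localization.AtPrime p)
        (_ ⧸ (Module.Dual.eval (Localization.AtPrime p) (LocalizedModule.AtPrime p M)).range)) :
    Module.IsReflexive R M := by
  have := Module.finitePresentation_of_finite R M
  have := Module.finitePresentation_of_finite R (Module.Dual R M)
  let loc (p : Ideal R) [p.IsPrime] := LocalizedModule.mkLinearMap p.primeCompl M
  let loc₂ (p : Ideal R) [p.IsPrime] := localizedDual p.primeCompl (Localization.AtPrime p)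
    (localizedDual p.primeCompl (Localization.AtPrime p) (loc p))
  have localized_eval (p : Ideal R) [p.IsPrime] :=
    mapExtendScalars_dual_eval p.primeCompl (Localization.AtPrime p) (loc p)
  have injective : Function.Injective (Module.Dual.eval R M) := by
    refine LinearMap.ker_eq_bot.mp (Submodule.subsingleton_iff_eq_bot.mp ?_)
    by_contra! h
    obtain ⟨p, hp⟩ := associatedPrimes.nonempty R (Module.Dual.eval R M).ker
    have := hp.isPrime
    exact hker p (localized_eval p ▸ maximalIdeal_mem_associatedPrimes_ker p (loc p) (loc₂ p) hp)
  have surjective : Function.Surjective (Module.Dual.eval R M) := by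
    refine LinearMap.range_eq_top.mp (Submodule.Quotient.subsingleton_iff.mp ?_)
    by_contra! h
    obtain ⟨p, hp⟩ := associatedPrimes.nonempty R (_ ⧸ (Module.Dual.eval R M).range)
    have := hp.isPrime
    refine hcoker p ?_ (localized_eval p ▸
      maximalIdeal_mem_associatedPrimes_quotient_range p (loc p) (loc₂ p) hp)
    rw [← localized_eval]
    exact IsLocalizedModule.map_injective p.primeCompl (loc p) (loc₂ p) _ injective
  exact ⟨injective, surjective⟩

end Globalization

section Depth

variable {A : Type u} [CommRing A] {L N : Type u} [AddCommGroup L] [Module A L] [AddCommGroup N]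
  [Module A N]

lemma natCast_le_rdepth_iff {k : ℕ} : (k : ℕ∞) ≤ rdepth A N ↔
    ∃ rs : List A, k ≤ rs.length ∧ (∀ r ∈ rs, r ∈ nonunits A) ∧ IsWeaklyRegular N rs := by
  refine ⟨fun h => ?_, fun ⟨rs, hk, hrs, hreg⟩ =>
    (Nat.cast_le.mpr hk).trans (le_sSup ⟨rs, rfl, hrs, hreg⟩)⟩
  obtain _ | k := k
  · exact ⟨[], le_rfl, by simp, .nil A N⟩
  · obtain ⟨_, ⟨rs, rfl, hrs, hreg⟩, hk⟩ :=
      lt_sSup_iff.mp ((Nat.cast_lt.mpr k.lt_succ_self).trans_le h)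
    exact ⟨rs, Nat.cast_lt.mp hk, hrs, hreg⟩

lemma natCast_add_one_le_rdepth_iff {k : ℕ} : (k + 1 : ℕ∞) ≤ rdepth A N ↔
    ∃ x ∈ nonunits A, IsSMulRegular N x ∧ (k : ℕ∞) ≤ rdepth A (QuotSMulTop x N) := by
  rw [← Nat.cast_add_one]
  simp only [natCast_le_rdepth_iff]
  constructor
  · rintro ⟨_ | ⟨x, rs⟩, hk, hrs, hreg⟩
    · simp at hk
    · rw [isWeaklyRegular_cons_iff] at hreg
      rw [List.forall_mem_cons] at hrs
      exact ⟨x, hrs.1, hreg.1, rs, Nat.le_of_succ_le_succ hk, hrs.2, hreg.2⟩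
  · rintro ⟨x, hx, hxreg, rs, hk, hrs, hreg⟩
    exact ⟨x :: rs, Nat.succ_le_succ hk, List.forall_mem_cons.mpr ⟨hx, hrs⟩,
      (isWeaklyRegular_cons_iff N x rs).mpr ⟨hxreg, hreg⟩⟩

lemma one_le_rdepth_iff_exists : 1 ≤ rdepth A N ↔ ∃ x ∈ nonunits A, IsSMulRegular N x := by
  simpa using natCast_add_one_le_rdepth_iff (A := A) (N := N) (k := 0)

lemma rdepth_eq_top_of_subsingleton [Nontrivial A] [Subsingleton N] : rdepth A N = ⊤ :=
  ENat.eq_top_iff_forall_ge.mpr fun k => natCast_le_rdepth_iff.mpr ⟨List.replicate k 0, by simp,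
    by simp, (isWeaklyRegular_iff N _).mpr fun _ _ => Function.injective_of_subsingleton _⟩

lemma one_le_rdepth_dual (h : 1 ≤ rdepth A A) : 1 ≤ rdepth A (Module.Dual A N) := by
  obtain ⟨x, hx, hreg⟩ := one_le_rdepth_iff_exists.mp h
  exact one_le_rdepth_iff_exists.mpr ⟨x, hx, fun _ _ h =>
    LinearMap.ext fun n => hreg (LinearMap.congr_fun h n)⟩

variable [IsLocalRing A]

lemma one_le_rdepth_iff [IsNoetherianRing A] [Module.Finite A N] :
    1 ≤ rdepth A N ↔ maximalIdeal A ∉ associatedPrimes A N :=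
  one_le_rdepth_iff_exists.trans exists_isSMulRegular_mem_maximalIdeal_iff

lemma mem_range_of_forall_smul_mem_range {f : L →ₗ[A] N} (hf : Function.Injective f)
    (hL : 2 ≤ rdepth A L) (hN : 1 ≤ rdepth A N) {n : N}
    (hn : ∀ a ∈ maximalIdeal A, a • n ∈ f.range) : n ∈ f.range := by
  obtain ⟨x, hx, hxL, hL'⟩ := natCast_add_one_le_rdepth_iff.mp (hL : ((1 : ℕ) + 1 : ℕ∞) ≤ _)
  obtain ⟨y, hy, hyL⟩ := one_le_rdepth_iff_exists.mp hL'
  obtain ⟨z, hz, hzN⟩ := one_le_rdepth_iff_exists.mp hN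
  obtain ⟨u, hu⟩ := hn x hx
  obtain ⟨v, hv⟩ := hn y hy
  have hyu : y • u = x • v := hf (by rw [map_smul, map_smul, hu, hv, smul_comm])
  obtain ⟨w, -, rfl⟩ : u ∈ x • (⊤ : Submodule A L) :=
    (isSMulRegular_quotient_iff_mem_of_smul_mem _ y).mp hyL u
      (hyu ▸ Submodule.smul_mem_pointwise_smul v x ⊤ trivial)
  have hxd : x • (n - f w) = 0 := by rw [smul_sub, ← hu, ← map_smul]; exact sub_self _
  obtain ⟨t, ht⟩ : z • (n - f w) ∈ f.range := by
    rw [smul_sub, ← map_smul]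
    exact sub_mem (hn z hz) ⟨_, rfl⟩
  have ht_zero : t = 0 := hxL.right_eq_zero_of_smul
    (hf (by rw [map_smul, ht, smul_comm, hxd, smul_zero, map_zero]))
  have hd : n - f w = 0 := hzN.right_eq_zero_of_smul (by rw [← ht, ht_zero, map_zero])
  exact ⟨w, (sub_eq_zero.mp hd).symm⟩

lemma maximalIdeal_notMem_associatedPrimes_quotient_range [IsNoetherianRing A] {f : L →ₗ[A] N}
    (hf : Function.Injective f) (hL : 2 ≤ rdepth A L) (hN : 1 ≤ rdepth A N) :
    maximalIdeal A ∉ associatedPrimes A (N ⧸ f.range) := by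
  intro h
  obtain ⟨hprime, c, hc⟩ := isAssociatedPrime_iff.mp h
  obtain ⟨n, rfl⟩ := f.range.mkQ_surjective c
  have mem_iff (a : A) : a ∈ maximalIdeal A ↔ a • n ∈ f.range := by
    rw [hc, Submodule.mem_colon_singleton, Submodule.mem_bot, ← map_smul, Submodule.mkQ_apply,
      Submodule.Quotient.mk_eq_zero]
  refine (Ideal.ne_top_iff_one _).mp hprime.ne_top ((mem_iff 1).mpr ?_)
  rw [one_smul]
  exact mem_range_of_forall_smul_mem_range hf hL hN fun a => (mem_iff a).mp

end Depth

section Localization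

variable {R : Type u} [CommRing R] (p : Ideal R) [p.IsPrime] {M : Type u} [AddCommGroup M]
  [Module R M]

lemma krullDimLE_localization_atPrime_iff {n : ℕ} :
    Ring.KrullDimLE n (Localization.AtPrime p) ↔ p.height ≤ n := by
  rw [Ring.krullDimLE_iff, IsLocalization.AtPrime.ringKrullDim_eq_height p]
  norm_cast

lemma SerreCond.le_rdepth {n : ℕ} (h : SerreCond R M n) :
    min (n : ℕ∞) p.height ≤ rdepth (Localization.AtPrime p) (LocalizedModule.AtPrime p M) := by
  rcases subsingleton_or_nontrivial (LocalizedModule.AtPrime p M) with _ | hM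
  · simp [rdepth_eq_top_of_subsingleton]
  · exact (PrimeSpectrum.height_eq_orderHeight ⟨p, ‹_›⟩).symm ▸ h p ‹_› hM

end Localization

section Gorenstein

variable {R : Type u} [CommRing R]

lemma idLE_iff_hasInjectiveDimensionLE {n : ℕ} {M : Type u} [AddCommGroup M] [Module R M] :
    idLE R n M ↔ HasInjectiveDimensionLE (ModuleCat.of R M) n := by
  induction n generalizing M with
  | zero =>
    exact (Module.injective_iff_injective_object R M).trans
      injective_iff_hasInjectiveDimensionLT_one
  | succ n ih =>
    constructor
    · rintro ⟨I, _, _, hI, f, hf, h⟩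
      have := (Module.injective_iff_injective_object R I).mp hI
      exact ((shortExact_mkQ_range hf).hasInjectiveDimensionLT_X₃_iff n this).mp (ih.mp h)
    · intro h
      let I := Injective.under (ModuleCat.of R M)
      let ι := Injective.ι (ModuleCat.of R M)
      have hι := (ModuleCat.mono_iff_injective ι).mp inferInstance
      have hI : Injective (ModuleCat.of R I) := inferInstanceAs (Injective I)
      exact ⟨I, _, _, (Module.injective_iff_injective_object R I).mpr hI, ι.hom, hι, ih.mpr
        (((shortExact_mkQ_range hι).hasInjectiveDimensionLT_X₃_iff n hI).mpr h)⟩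

lemma isGorensteinLocalRing_localization_atPrime (hR : IsGorensteinLocalRing R) (p : Ideal R)
    [p.IsPrime] : IsGorensteinLocalRing (Localization.AtPrime p) := by
  obtain ⟨_, _, n, hn⟩ := hR
  have := idLE_iff_hasInjectiveDimensionLE.mp hn
  have h := ModuleCat.localizedModule_hasInjectiveDimensionLE n p.primeCompl (ModuleCat.of R R)
  let e : (ModuleCat.of R R).localizedModule p.primeCompl ≃ₗ[Localization.AtPrime p]
      ModuleCat.of (Localization.AtPrime p) (Localization.AtPrime p) :=
    Shrink.linearEquiv (Localization.AtPrime p) (LocalizedModule.AtPrime p R)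
  exact ⟨inferInstance, inferInstance, n, idLE_iff_hasInjectiveDimensionLE.mpr
    ((ModuleCat.hasInjectiveDimensionLE_iff_of_linearEquiv e n).mp h)⟩

lemma IsGorensteinLocalRing.serreCond_one (hR : IsGorensteinLocalRing R) : SerreCond R R 1 := by
  intro p hp _
  obtain ⟨_, _, n, hn⟩ := isGorensteinLocalRing_localization_atPrime hR p
  rw [← PrimeSpectrum.height_eq_orderHeight]
  by_cases h : maximalIdeal (Localization.AtPrime p) ∈ associatedPrimes _ (Localization.AtPrime p)
  · have := (krullDimLE_localization_atPrime_iff p).mp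
      (krullDimLE_zero_of_maximalIdeal_mem_associatedPrimes
        (idLE_iff_hasInjectiveDimensionLE.mp hn) h)
    exact (min_le_right _ _).trans (this.trans bot_le)
  · exact (min_le_left _ _).trans (one_le_rdepth_iff.mpr h)

lemma IsGorensteinLocalRing.dual_eval_bijective (hR : IsGorensteinLocalRing R)
    [Ring.KrullDimLE 1 R] {N : Type u} [AddCommGroup N] [Module R N] [Module.Finite R N]
    (hN : ringKrullDim R ≤ rdepth R N) : Function.Bijective (Module.Dual.eval R N) := by
  obtain ⟨_, _, n, hn⟩ := hR
  refine dual_eval_bijective_of_krullDimLE_one (idLE_iff_hasInjectiveDimensionLE.mp hn) fun h => ?_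
  have rdepth_zero : rdepth R N = 0 :=
    Order.lt_one_iff.mp (not_le.mp fun h_one_le => one_le_rdepth_iff.mp h_one_le h)
  have : Ring.KrullDimLE 0 R := Ring.krullDimLE_iff.mpr (by simpa [rdepth_zero] using hN)
  exact minimalPrimes_subset_associatedPrimes_self
    (Ideal.mem_minimalPrimes_of_krullDimLE_zero (maximalIdeal R))

end Gorenstein

lemma isReflexive_of_forall_bijective_or_two_le_rdepth {R : Type u} [CommRing R]
    [IsNoetherianRing R] {M : Type u} [AddCommGroup M] [Module R M] [Module.Finite R M]
    (h : ∀ (p : Ideal R) [p.IsPrime],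
      Function.Bijective
        (Module.Dual.eval (Localization.AtPrime p) (LocalizedModule.AtPrime p M)) ∨
      1 ≤ rdepth (Localization.AtPrime p) (Localization.AtPrime p) ∧
        2 ≤ rdepth (Localization.AtPrime p) (LocalizedModule.AtPrime p M)) :
    Module.IsReflexive R M := by
  refine isReflexive_of_forall_prime (fun p _ => ?_) (fun p _ injective => ?_)
  · rcases h p with bijective | ⟨-, hM⟩
    · have := Submodule.subsingleton_iff_eq_bot.mpr (LinearMap.ker_eq_bot.mpr bijective.injective)
      simp [associatedPrimes.eq_empty_of_subsingleton]
    · exact fun hker => one_le_rdepth_iff.mp (one_le_two.trans hM)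
        (associatedPrimes.subset_of_injective (Submodule.subtype_injective _) hker)
  · rcases h p with bijective | ⟨hR, hM⟩
    · have := Submodule.Quotient.subsingleton_iff.mpr
        (LinearMap.range_eq_top.mpr bijective.surjective)
      simp [associatedPrimes.eq_empty_of_subsingleton]
    · exact maximalIdeal_notMem_associatedPrimes_quotient_range injective hM
        (one_le_rdepth_dual hR)

theorem stmt15_general {R : Type u} [CommRing R] [IsNoetherianRing R] (hS1 : SerreCond R R 1)
    (hG1 : ∀ (p : Ideal R) [p.IsPrime], p.height ≤ 1 →
      IsGorensteinLocalRing (Localization.AtPrime p))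
    {M : Type u} [AddCommGroup M] [Module R M] [Module.Finite R M] (hS2 : SerreCond R M 2) :
    Module.IsReflexive R M := by
  refine isReflexive_of_forall_bijective_or_two_le_rdepth fun p _ => ?_
  rcases le_or_gt p.height 1 with hp | hp
  · have := (krullDimLE_localization_atPrime_iff p).mpr hp
    refine .inl ((hG1 p hp).dual_eval_bijective ?_)
    rw [IsLocalization.AtPrime.ringKrullDim_eq_height p, WithBot.coe_le_coe]
    exact (le_min (hp.trans one_le_two) le_rfl).trans (hS2.le_rdepth p)
  · exact .inr ⟨(le_min le_rfl hp.le).trans (hS1.le_rdepth p),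
      (le_min le_rfl (Order.add_one_le_of_lt hp)).trans (hS2.le_rdepth p)⟩

/-- over a Gorenstein local ring, `(S_2)` implies reflexive. -/
theorem stmt15 (R : Type u) [CommRing R] (hG : IsGorensteinLocalRing R)
    (M : Type u) [AddCommGroup M] [Module R M] [Module.Finite R M]
    (hS2 : SerreCond R M 2) :
    Module.IsReflexive R M :=
  have := hG.1
  stmt15_general hG.serreCond_one
    (fun p _ _ => isGorensteinLocalRing_localization_atPrime hG p) hS2

end
end
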